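/- For every integer ℓ ≥ 2 and every real x > 0, the normalized random variables (K_{ℓ,n} − E[K_{ℓ,n}])/√(Var(K_{ℓ,n})) converge to the standard Gaussian in the sense of moments: for every polynomial f (equivalently, for every nonnegative integer p with f(s) = s^p), E[f((K_{ℓ,n} − E[K_{ℓ,n}])/√(Var(K_{ℓ,n})))] converges, as n → ∞, to (1/√(2π)) ∫_{−∞}^{∞} f(s) e^{−s²/2} ds. -/

import Mathlib

open Filter Topology Real MeasureTheory Asymptotics

noncomputable section

/-- Number of joint orbits of the subgroup generated by a tuple of permutations. -/
def kappa {ℓ n : ℕ} (σ : Fin ℓ → Equiv.Perm (Fin n)) : ℕ :=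
  Nat.card (MulAction.orbitRel.Quotient (Subgroup.closure (Set.range σ)) (Fin n))

/-- `Acount ℓ n k` is the number of commuting `ℓ`-tuples of permutations of `{1,…,n}`
with exactly `k` joint orbits. -/
def Acount (ℓ n k : ℕ) : ℕ :=
  Nat.card {σ : Fin ℓ → Equiv.Perm (Fin n) //
    (∀ i j, σ i * σ j = σ j * σ i) ∧ kappa σ = k}

/-- `Hpoly ℓ n x = (1/n!) ∑_k A(ℓ,n,k) x^k`. -/
def Hpoly (ℓ n : ℕ) (x : ℝ) : ℝ :=
  (1 / (n.factorial : ℝ)) * ∑ k ∈ Finset.range (n + 1), (Acount ℓ n k : ℝ) * x ^ k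

/-- Expectation, under the Ewens-like measure `P_{ℓ,n,x}`, of `g(K_{ℓ,n})`. -/
def expectK (ℓ n : ℕ) (x : ℝ) (g : ℕ → ℝ) : ℝ :=
  (∑ k ∈ Finset.range (n + 1), g k * (Acount ℓ n k : ℝ) * x ^ k) /
    (∑ k ∈ Finset.range (n + 1), (Acount ℓ n k : ℝ) * x ^ k)

/-- Mean of `K_{ℓ,n}` under `P_{ℓ,n,x}`. -/
def meanK (ℓ n : ℕ) (x : ℝ) : ℝ := expectK ℓ n x (fun k => (k : ℝ))

/-- Variance of `K_{ℓ,n}` under `P_{ℓ,n,x}`. -/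
def varK (ℓ n : ℕ) (x : ℝ) : ℝ :=
  expectK ℓ n x (fun k => ((k : ℝ) - meanK ℓ n x) ^ 2)

/-- Real Riemann zeta values (as a series), `zetaR s = ∑_{m ≥ 1} m^{-s}`. -/
def zetaR (s : ℝ) : ℝ := ∑' m : ℕ, 1 / ((m : ℝ) + 1) ^ s

/-- The constant `K_ℓ = (ℓ-1)! ζ(2)⋯ζ(ℓ)`. -/
def Kconst (ℓ : ℕ) : ℝ := ((ℓ - 1).factorial : ℝ) * ∏ j ∈ Finset.Icc 2 ℓ, zetaR (j : ℝ)

/-- The multiple series `Z^{[ℓ]}_{α_1,…,α_ℓ}(t)` with complex exponents. -/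
def Zc (ℓ : ℕ) (α : Fin ℓ → ℂ) (t : ℝ) : ℂ :=
  ∑' δ : Fin ℓ → ℕ+,
    (∏ i, ((δ i : ℕ) : ℂ) ^ (α i - 1)) *
      Complex.exp (-(((∏ i, ((δ i : ℕ) : ℝ)) * t : ℝ) : ℂ))

/-- The multiple series `Z^{[ℓ]}_{α_1,…,α_ℓ}(t)` with real exponents. -/
def Zr (ℓ : ℕ) (α : Fin ℓ → ℝ) (t : ℝ) : ℝ :=
  ∑' δ : Fin ℓ → ℕ+,
    (∏ i, ((δ i : ℕ) : ℝ) ^ (α i - 1)) *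
      Real.exp (-(∏ i, ((δ i : ℕ) : ℝ)) * t)

/-- The staircase series `Z_m^{[ℓ]}(t) = Z^{[ℓ]}_{m,m-1,…,m-ℓ+1}(t)`. -/
def Zstair (ℓ : ℕ) (m : ℤ) (t : ℝ) : ℝ :=
  Zr ℓ (fun i => (m : ℝ) - (i : ℕ)) t

/-- The inverse function `(Z_ℓ^{[ℓ]})^{-1} : (0,∞) → (0,∞)`. -/
def ZstairInv (ℓ : ℕ) (u : ℝ) : ℝ :=
  Function.invFunOn (Zstair ℓ ℓ) (Set.Ioi 0) u

/-- The function `q_{ℓ,n}(y,u,θ)` from the saddle point analysis. -/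
def qfun (ℓ n : ℕ) (y u θ : ℝ) : ℂ :=
  Complex.I * (n : ℂ) * (θ : ℂ) - (y : ℂ) * ∑' δ : Fin ℓ → ℕ+,
    (∏ i, ((δ i : ℕ) : ℂ) ^ ((ℓ : ℤ) - 2 - (i : ℕ))) *
      Complex.exp (-(((∏ i, ((δ i : ℕ) : ℝ)) * u : ℝ) : ℂ)) *
      (Complex.exp (Complex.I * (((∏ i, ((δ i : ℕ) : ℝ)) * θ : ℝ) : ℂ)) - 1)

/-- The normalizing sequence `b_n = ((x K_ℓ)^{1/(2ℓ)}/√(ℓ(ℓ-1))) n^{(ℓ-1)/(2ℓ)}`. -/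
def bseq (ℓ : ℕ) (x : ℝ) (n : ℕ) : ℝ :=
  (x * Kconst ℓ) ^ ((1 : ℝ) / (2 * (ℓ : ℝ))) / Real.sqrt ((ℓ : ℝ) * ((ℓ : ℝ) - 1)) *
    (n : ℝ) ^ (((ℓ : ℝ) - 1) / (2 * (ℓ : ℝ)))

/-- The sequence `x_n = x e^{s/b_n}`. -/
def xseq (ℓ : ℕ) (x s : ℝ) (n : ℕ) : ℝ := x * Real.exp (s / bseq ℓ x n)

/-- The saddle point sequence `t_n = (Z_ℓ^{[ℓ]})^{-1}(n/x)`. -/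
def tseq (ℓ : ℕ) (x : ℝ) (n : ℕ) : ℝ := ZstairInv ℓ ((n : ℝ) / x)

end

/-!
The orbits of a commuting family are themselves commuting transitive families, so the generating
function of the number of orbits satisfies the recursion of an exponential formula: with `a m` the
number of transitive commuting families on `m` points divided by `m!`,
`∑ₙ Wₙ(y) zⁿ / n! = exp (y ∑ₘ aₘ zᵐ)`. Transitive commuting `ℓ`-families on `m` points are
transitive actions of `ℤ ^ ℓ`, so `aₘ` is controlled by the number of subgroups of index `m`; this
pins down the order of `∑ₘ m^q aₘ e^{-mt}` as `t → 0`, up to constants, which is all that is used.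

Cauchy's formula on the circle of radius `e^{-t}` turns `Wₙ(y)` into an integral. The saddle point
`t` solves `x ∑ₘ m aₘ e^{-mt} = n`. Put `S = ∑ₘ aₘ e^{-mt}` and let `V` be the part of `S` which
remains after projecting the constant `1` away from the direction `m` in `L²(aₘ e^{-mt})`. For the
tilted parameter `y = x e^h` with `h = s / √(x V)`, the Laplace method gives
`e^{-h x S} Wₙ(x e^h) / Wₙ(x) → e^{s²/2}`: the moment generating function of `(K - x S) / √(x V)`
converges to the Gaussian one. Convergence of the moment generating functions bounds all moments
and forces them to converge to the Gaussian moments, and this is insensitive to replacing `x S` and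
`√(x V)` by the true mean and standard deviation.
-/

/-! ### Orbit generating functions of commuting families -/

section OrbitSpace

open Equiv

variable {ι α β : Type*}

/-- The orbit space of the subgroup generated by a family `σ` of permutations. It is encoded as the
quotient by the one-step relation `a ∼ σ i a`, so that maps out of it need only be checked on the
generators `σ i`. -/
abbrev OrbitSpace (σ : ι → Perm α) : Type _ :=
  Quot fun a b : α => ∃ i, σ i a = b

/-- The members of the family `σ` commute pairwise. -/
def IsCommuting (σ : ι → Perm α) : Prop :=
  ∀ i j, Commute (σ i) (σ j)

/-- The family `σ` has at most one orbit; a family on the empty type is transitive. -/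
def IsTransitive (σ : ι → Perm α) : Prop :=
  Subsingleton (OrbitSpace σ)

/-- Commuting `ι`-indexed families of permutations of `α`. -/
abbrev CommutingFamily (ι α : Type*) : Type _ :=
  {σ : ι → Perm α // IsCommuting σ}

/-- Commuting families of permutations with at most one orbit. -/
abbrev TransitiveCommutingFamily (ι α : Type*) : Type _ :=
  {σ : ι → Perm α // IsCommuting σ ∧ IsTransitive σ}

lemma OrbitSpace.mk_apply (σ : ι → Perm α) (i : ι) (a : α) :
    (Quot.mk _ (σ i a) : OrbitSpace σ) = Quot.mk _ a :=
  (Quot.sound ⟨i, rfl⟩).symm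

lemma OrbitSpace.mk_apply_of_mem_closure (σ : ι → Perm α) {g : Perm α}
    (hg : g ∈ Subgroup.closure (Set.range σ)) (a : α) :
    (Quot.mk _ (g a) : OrbitSpace σ) = Quot.mk _ a := by
  induction hg using Subgroup.closure_induction generalizing a with
  | mem g hg =>
    obtain ⟨i, rfl⟩ := hg
    exact OrbitSpace.mk_apply σ i a
  | one => rfl
  | mul g h _ _ ihg ihh => exact (ihg (h a)).trans (ihh a)
  | inv g _ ih => simpa using (ih (g⁻¹ a)).symm

lemma isTransitive_of_forall_mk_eq {σ : ι → Perm α} (o : α)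
    (h : ∀ a, (Quot.mk _ a : OrbitSpace σ) = Quot.mk _ o) : IsTransitive σ := by
  have hmk : ∀ q : OrbitSpace σ, q = Quot.mk _ o := Quot.ind h
  exact ⟨fun p q => (hmk p).trans (hmk q).symm⟩

lemma kappa_eq_card_orbitSpace {ℓ n : ℕ} (σ : Fin ℓ → Perm (Fin n)) :
    kappa σ = Nat.card (OrbitSpace σ) := by
  refine Nat.card_congr
    { toFun := Quotient.lift (fun a => (Quot.mk _ a : OrbitSpace σ)) ?_
      invFun := Quot.lift (fun a => Quotient.mk _ a) ?_
      left_inv := Quotient.ind fun _ => rfl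
      right_inv := Quot.ind fun _ => rfl }
  · rintro _ b ⟨⟨g, hg⟩, rfl⟩
    exact OrbitSpace.mk_apply_of_mem_closure σ hg b
  · rintro a _ ⟨i, rfl⟩
    have hσ : σ i ∈ Subgroup.closure (Set.range σ) := Subgroup.subset_closure ⟨i, rfl⟩
    exact (Quotient.sound (s := MulAction.orbitRel (Subgroup.closure (Set.range σ)) (Fin n))
      (a := σ i a) (b := a) ⟨⟨σ i, hσ⟩, rfl⟩).symm

lemma card_orbitSpace_le [Finite α] (σ : ι → Perm α) : Nat.card (OrbitSpace σ) ≤ Nat.card α :=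
  Nat.card_le_card_of_surjective _ Quot.mk_surjective

/-- Conjugation of a family of permutations by a bijection of the underlying types. -/
def conjFamily (ι : Type*) (e : α ≃ β) : (ι → Perm α) ≃ (ι → Perm β) :=
  Equiv.piCongrRight fun _ => e.permCongr

lemma conjFamily_apply_apply (e : α ≃ β) (σ : ι → Perm α) (i : ι) (a : α) :
    conjFamily ι e σ i (e a) = e (σ i a) := by
  simp [conjFamily]

lemma isCommuting_conjFamily (e : α ≃ β) (σ : ι → Perm α) :
    IsCommuting (conjFamily ι e σ) ↔ IsCommuting σ :=
  forall₂_congr fun _ _ => commute_map_iff e.permCongrHom.injective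

/-- Conjugation identifies the orbit spaces. -/
def orbitSpaceConjEquiv (e : α ≃ β) (σ : ι → Perm α) :
    OrbitSpace σ ≃ OrbitSpace (conjFamily ι e σ) :=
  Quot.congr e fun a b => by simp only [conjFamily_apply_apply, e.apply_eq_iff_eq]

lemma isTransitive_conjFamily (e : α ≃ β) (σ : ι → Perm α) :
    IsTransitive (conjFamily ι e σ) ↔ IsTransitive σ :=
  (orbitSpaceConjEquiv e σ).subsingleton_congr.symm

end OrbitSpace

section Counting

open Equiv

variable (ι : Type*) {α β : Type*}

/-- The generating function `∑ y ^ #orbits` over all commuting `ι`-families of permutations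
of `α`. It is a finite sum when `ι` and `α` are finite. -/
noncomputable def orbitGF (ι α : Type*) (y : ℝ) : ℝ :=
  ∑ᶠ σ : CommutingFamily ι α, y ^ Nat.card (OrbitSpace σ.1)

/-- The number of transitive commuting `ι`-families of permutations of `α`. -/
noncomputable def numTransitive (ι α : Type*) : ℕ :=
  Nat.card (TransitiveCommutingFamily ι α)

lemma orbitGF_congr (e : α ≃ β) (y : ℝ) : orbitGF ι α y = orbitGF ι β y := by
  refine finsum_eq_of_bijective
    ((conjFamily ι e).subtypeEquiv fun σ => (isCommuting_conjFamily e σ).symm)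
    (Equiv.bijective _) fun σ => ?_
  exact congrArg (y ^ ·) (Nat.card_congr (orbitSpaceConjEquiv e σ.1))

lemma numTransitive_congr (e : α ≃ β) : numTransitive ι α = numTransitive ι β :=
  Nat.card_congr <| (conjFamily ι e).subtypeEquiv fun σ => by
    rw [isCommuting_conjFamily, isTransitive_conjFamily]

lemma orbitGF_pos [Finite ι] [Finite α] {y : ℝ} (hy : 0 < y) : 0 < orbitGF ι α y := by
  have : Fintype (CommutingFamily ι α) := Fintype.ofFinite _
  have : Nonempty (CommutingFamily ι α) := ⟨⟨fun _ => 1, fun _ _ => Commute.refl 1⟩⟩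
  rw [orbitGF, finsum_eq_sum_of_fintype]
  exact Finset.sum_pos (fun σ _ => pow_pos hy _) Finset.univ_nonempty

lemma orbitGF_of_isEmpty [IsEmpty α] (y : ℝ) : orbitGF ι α y = 1 := by
  have : Unique (CommutingFamily ι α) :=
    { default := ⟨fun _ => 1, fun _ _ => Commute.refl 1⟩
      uniq := fun σ => Subtype.ext (Subsingleton.elim _ _) }
  have : IsEmpty (OrbitSpace (default : CommutingFamily ι α).1) := ⟨Quot.ind isEmptyElim⟩
  rw [orbitGF, finsum_unique, Nat.card_of_isEmpty, pow_zero]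

lemma sum_Acount_mul_pow (ℓ n : ℕ) (y : ℝ) :
    ∑ k ∈ Finset.range (n + 1), (Acount ℓ n k : ℝ) * y ^ k = orbitGF (Fin ℓ) (Fin n) y := by
  classical
  have : Fintype (CommutingFamily (Fin ℓ) (Fin n)) := Fintype.ofFinite _
  have card_mem : ∀ σ ∈ (Finset.univ : Finset (CommutingFamily (Fin ℓ) (Fin n))),
      Nat.card (OrbitSpace σ.1) ∈ Finset.range (n + 1) := fun σ _ => by
    simpa [Nat.lt_succ_iff] using card_orbitSpace_le σ.1
  rw [orbitGF, finsum_eq_sum_of_fintype, ← Finset.sum_fiberwise_of_maps_to card_mem]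
  refine Finset.sum_congr rfl fun k _ => ?_
  have hAcount : Acount ℓ n k =
      (Finset.univ.filter fun σ : CommutingFamily (Fin ℓ) (Fin n) =>
        Nat.card (OrbitSpace σ.1) = k).card := by
    rw [← Fintype.card_subtype, ← Nat.card_eq_fintype_card]
    exact Nat.card_congr ((Equiv.subtypeSubtypeEquivSubtypeInter
      (fun σ : Fin ℓ → Perm (Fin n) => IsCommuting σ)
      (fun σ => Nat.card (OrbitSpace σ) = k)).trans
      (Equiv.subtypeEquivRight fun σ => by rw [kappa_eq_card_orbitSpace]; rfl)).symm
  rw [Finset.sum_congr rfl fun σ hσ => by rw [(Finset.mem_filter.1 hσ).2], Finset.sum_const,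
    nsmul_eq_mul, hAcount]

end Counting

section Gluing

open Equiv

variable {ι α : Type*} {p : α → Prop} [DecidablePred p]

/-- The family on `α` obtained from a family on `{a // p a}` and one on its complement. -/
def glueFamily (σ : ι → Perm {a // p a}) (τ : ι → Perm {a // ¬ p a}) : ι → Perm α :=
  fun i => Perm.subtypeCongrHom p (σ i, τ i)

variable (σ : ι → Perm {a // p a}) (τ : ι → Perm {a // ¬ p a})

lemma glueFamily_apply_of_pos (i : ι) {a : α} (ha : p a) : glueFamily σ τ i a = σ i ⟨a, ha⟩ :=
  Perm.subtypeCongr.left_apply _ _ ha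

lemma glueFamily_apply_of_neg (i : ι) {a : α} (ha : ¬ p a) : glueFamily σ τ i a = τ i ⟨a, ha⟩ :=
  Perm.subtypeCongr.right_apply _ _ ha

lemma isCommuting_glueFamily : IsCommuting (glueFamily σ τ) ↔ IsCommuting σ ∧ IsCommuting τ := by
  have hcomm : ∀ i j, Commute (glueFamily σ τ i) (glueFamily σ τ j) ↔
      Commute (σ i) (σ j) ∧ Commute (τ i) (τ j) := fun i j =>
    (commute_map_iff (Perm.subtypeCongrHom_injective p)).trans Prod.commute_iff
  simp only [IsCommuting, hcomm, forall_and]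

lemma glueFamily_injective :
    Function.Injective fun x : (ι → Perm {a // p a}) × (ι → Perm {a // ¬ p a}) =>
      glueFamily x.1 x.2 := by
  intro x x' h
  have hx : ∀ i, (x.1 i, x.2 i) = (x'.1 i, x'.2 i) := fun i =>
    Perm.subtypeCongrHom_injective p (congrFun h i)
  exact Prod.ext (funext fun i => congrArg Prod.fst (hx i))
    (funext fun i => congrArg Prod.snd (hx i))

lemma exists_glueFamily_eq (σ : ι → Perm α) (hσ : ∀ i a, p (σ i a) ↔ p a) :
    ∃ (σ₁ : ι → Perm {a // p a}) (σ₂ : ι → Perm {a // ¬ p a}), glueFamily σ₁ σ₂ = σ := by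
  refine ⟨fun i => (σ i).subtypePerm (hσ i),
    fun i => (σ i).subtypePerm fun a => not_congr (hσ i a), funext fun i => Equiv.ext fun a => ?_⟩
  by_cases ha : p a
  · rw [glueFamily_apply_of_pos _ _ i ha, Perm.subtypePerm_apply]
  · rw [glueFamily_apply_of_neg _ _ i ha, Perm.subtypePerm_apply]

/-- The orbits of a glued family are the orbits of its two pieces. -/
def orbitSpaceGlueEquiv : OrbitSpace (glueFamily σ τ) ≃ OrbitSpace σ ⊕ OrbitSpace τ where
  toFun := Quot.lift (fun a => if ha : p a then Sum.inl (Quot.mk _ ⟨a, ha⟩)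
      else Sum.inr (Quot.mk _ ⟨a, ha⟩)) <| by
    rintro a _ ⟨i, rfl⟩
    by_cases ha : p a
    · simp [glueFamily_apply_of_pos σ τ i ha, ha, (σ i ⟨a, ha⟩).2, OrbitSpace.mk_apply]
    · simp [glueFamily_apply_of_neg σ τ i ha, ha, (τ i ⟨a, ha⟩).2, OrbitSpace.mk_apply]
  invFun := Sum.elim
    (Quot.lift (fun a => Quot.mk _ a.1) fun a _ ⟨i, hi⟩ =>
      Quot.sound ⟨i, hi ▸ glueFamily_apply_of_pos σ τ i a.2⟩)
    (Quot.lift (fun a => Quot.mk _ a.1) fun a _ ⟨i, hi⟩ =>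
      Quot.sound ⟨i, hi ▸ glueFamily_apply_of_neg σ τ i a.2⟩)
  left_inv := Quot.ind fun a => by by_cases ha : p a <;> simp [ha]
  right_inv := by
    rintro (q | q) <;> induction q using Quot.ind with | _ a => simp [a.2]

lemma orbitSpaceGlueEquiv_mk_of_pos {a : α} (ha : p a) :
    orbitSpaceGlueEquiv σ τ (Quot.mk _ a) = Sum.inl (Quot.mk _ ⟨a, ha⟩) := by
  simp [orbitSpaceGlueEquiv, ha]

lemma orbitSpaceGlueEquiv_mk_of_neg {a : α} (ha : ¬ p a) :
    orbitSpaceGlueEquiv σ τ (Quot.mk _ a) = Sum.inr (Quot.mk _ ⟨a, ha⟩) := by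
  simp [orbitSpaceGlueEquiv, ha]

lemma card_orbitSpace_glueFamily [Finite α] [Nonempty {a // p a}] (hσ : IsTransitive σ) :
    Nat.card (OrbitSpace (glueFamily σ τ)) = Nat.card (OrbitSpace τ) + 1 := by
  have : Subsingleton (OrbitSpace σ) := hσ
  have : Nonempty (OrbitSpace σ) := Nonempty.map (Quot.mk _) ‹_›
  rw [Nat.card_congr (orbitSpaceGlueEquiv σ τ), Nat.card_sum, Nat.card_unique, add_comm]

end Gluing

section Recursion

open Equiv

variable {ι α : Type*} [Fintype α]

open scoped Classical in
/-- The orbit of the point `o` under the family `σ`. -/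
noncomputable def orbitOf (σ : ι → Perm α) (o : α) : Finset α :=
  {a | (Quot.mk _ a : OrbitSpace σ) = Quot.mk _ o}

lemma mem_orbitOf {σ : ι → Perm α} {o a : α} :
    a ∈ orbitOf σ o ↔ (Quot.mk _ a : OrbitSpace σ) = Quot.mk _ o := by
  simp [orbitOf]

lemma apply_mem_orbitOf_iff (σ : ι → Perm α) (o : α) (i : ι) (a : α) :
    σ i a ∈ orbitOf σ o ↔ a ∈ orbitOf σ o := by
  rw [mem_orbitOf, mem_orbitOf, OrbitSpace.mk_apply]

variable [DecidableEq α]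

lemma mem_orbitOf_glueFamily {S : Finset α} {o : α} (ho : o ∈ S) (σ : ι → Perm {a // a ∈ S})
    (τ : ι → Perm {a // a ∉ S}) (a : α) :
    a ∈ orbitOf (glueFamily σ τ) o ↔
      ∃ ha : a ∈ S, (Quot.mk _ ⟨a, ha⟩ : OrbitSpace σ) = Quot.mk _ ⟨o, ho⟩ := by
  rw [mem_orbitOf, ← (orbitSpaceGlueEquiv σ τ).injective.eq_iff,
    orbitSpaceGlueEquiv_mk_of_pos σ τ ho]
  by_cases ha : a ∈ S
  · simp [orbitSpaceGlueEquiv_mk_of_pos σ τ ha, ha]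
  · simp [orbitSpaceGlueEquiv_mk_of_neg σ τ ha, ha]

lemma orbitOf_glueFamily_eq_iff {S : Finset α} {o : α} (ho : o ∈ S) (σ : ι → Perm {a // a ∈ S})
    (τ : ι → Perm {a // a ∉ S}) : orbitOf (glueFamily σ τ) o = S ↔ IsTransitive σ := by
  constructor
  · intro h
    refine isTransitive_of_forall_mk_eq ⟨o, ho⟩ fun a => ?_
    exact ((mem_orbitOf_glueFamily ho σ τ a).1 (h.symm ▸ a.2)).2
  · intro (h : Subsingleton _)
    ext a
    rw [mem_orbitOf_glueFamily ho]
    exact ⟨fun ha => ha.1, fun ha => ⟨ha, Subsingleton.elim _ _⟩⟩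

/-- Commuting families for which `o` has orbit `S` are glued from a transitive family on `S`
and an arbitrary family on the complement. -/
noncomputable def glueEquiv {S : Finset α} {o : α} (ho : o ∈ S) :
    TransitiveCommutingFamily ι {a // a ∈ S} × CommutingFamily ι {a // a ∉ S} ≃
      {σ : CommutingFamily ι α // orbitOf σ.1 o = S} :=
  Equiv.ofBijective
    (fun x => ⟨⟨glueFamily x.1.1 x.2.1, (isCommuting_glueFamily _ _).2 ⟨x.1.2.1, x.2.2⟩⟩,
      (orbitOf_glueFamily_eq_iff ho _ _).2 x.1.2.2⟩) <| by
    constructor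
    · rintro ⟨σ, τ⟩ ⟨σ', τ'⟩ h
      have h' := glueFamily_injective (a₁ := (σ.1, τ.1)) (a₂ := (σ'.1, τ'.1))
        (congrArg (fun x => x.1.1) h)
      exact Prod.ext (Subtype.ext (congrArg Prod.fst h')) (Subtype.ext (congrArg Prod.snd h'))
    · rintro ⟨⟨σ, hσ⟩, rfl⟩
      obtain ⟨σ₁, σ₂, hglue⟩ := exists_glueFamily_eq σ (apply_mem_orbitOf_iff σ o)
      have hcomm := (isCommuting_glueFamily σ₁ σ₂).1 (by rwa [hglue])
      have htrans := (orbitOf_glueFamily_eq_iff ho σ₁ σ₂).1 (by rw [hglue])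
      exact ⟨⟨⟨σ₁, hcomm.1, htrans⟩, ⟨σ₂, hcomm.2⟩⟩, Subtype.ext (Subtype.ext hglue)⟩

lemma orbitGF_eq_sum_orbitOf [Finite ι] (o : α) (y : ℝ) :
    orbitGF ι α y = ∑ S : {S : Finset α // o ∈ S},
      numTransitive ι {a // a ∈ S.1} * (y * orbitGF ι {a // a ∉ S.1} y) := by
  have : ∀ β : Type _, [Finite β] → Fintype (CommutingFamily ι β) := fun _ => Fintype.ofFinite _
  have (S : Finset α) : Fintype (TransitiveCommutingFamily ι {a // a ∈ S}) := Fintype.ofFinite _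
  have : Fintype (CommutingFamily ι α) := Fintype.ofFinite _
  let orbit (σ : CommutingFamily ι α) : {S : Finset α // o ∈ S} :=
    ⟨orbitOf σ.1 o, mem_orbitOf.2 rfl⟩
  rw [orbitGF, finsum_eq_sum_of_fintype, ← Fintype.sum_fiberwise orbit]
  refine Finset.sum_congr rfl fun ⟨S, ho⟩ _ => ?_
  have : Nonempty {a // a ∈ S} := ⟨⟨o, ho⟩⟩
  let e := (glueEquiv (ι := ι) ho).trans
    (Equiv.subtypeEquivRight fun σ => (Subtype.ext_iff (a1 := orbit σ) (a2 := ⟨S, ho⟩)).symm)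
  have hterm : ∀ x, y ^ Nat.card (OrbitSpace (e x).1.1) =
      y * y ^ Nat.card (OrbitSpace x.2.1) := fun x => by
    rw [← pow_succ', ← card_orbitSpace_glueFamily _ _ x.1.2.2]
    rfl
  rw [← e.sum_comp, Finset.sum_congr rfl fun x _ => hterm x,
    Fintype.sum_prod_type' fun _ (τ : CommutingFamily ι {a // a ∉ S}) =>
      y * y ^ Nat.card (OrbitSpace τ.1), Finset.sum_const, nsmul_eq_mul, Finset.card_univ,
    ← Nat.card_eq_fintype_card, ← numTransitive, ← Finset.mul_sum, orbitGF,
    finsum_eq_sum_of_fintype]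

lemma sum_finset_of_mem {M : Type*} [AddCommMonoid M] (o : α) (f : ℕ → M) :
    ∑ S : {S : Finset α // o ∈ S}, f S.1.card =
      ∑ k ∈ Finset.range (Fintype.card α),
        (Fintype.card α - 1).choose k • f (k + 1) := by
  have hcard : (Finset.univ.erase o).card = Fintype.card α - 1 :=
    Finset.card_erase_of_mem (Finset.mem_univ o)
  have hpos : 0 < Fintype.card α := Fintype.card_pos_iff.2 ⟨o⟩
  calc ∑ S : {S : Finset α // o ∈ S}, f S.1.card
      = ∑ T ∈ (Finset.univ.erase o).powerset, f (T.card + 1) := by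
        refine Finset.sum_bij' (fun S _ => S.1.erase o)
          (fun T _ => ⟨insert o T, Finset.mem_insert_self o T⟩)
          (fun S _ => Finset.mem_powerset.2 (Finset.erase_subset_erase o (Finset.subset_univ _)))
          (fun _ _ => Finset.mem_univ _) (fun S _ => Subtype.ext (Finset.insert_erase S.2))
          (fun T hT => Finset.erase_insert fun ho => ?_)
          (fun S _ => by rw [Finset.card_erase_add_one S.2])
        exact Finset.notMem_erase o _ (Finset.mem_powerset.1 hT ho)
    _ = _ := by
        rw [Finset.sum_powerset_apply_card fun k => f (k + 1), hcard, Nat.sub_add_cancel hpos]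

lemma orbitGF_fin_succ (ι : Type*) [Finite ι] (n : ℕ) (y : ℝ) :
    orbitGF ι (Fin (n + 1)) y = y * ∑ k ∈ Finset.range (n + 1),
      n.choose k * (numTransitive ι (Fin (k + 1)) * orbitGF ι (Fin (n - k)) y) := by
  have hterm (S : Finset (Fin (n + 1))) :
      (numTransitive ι {a // a ∈ S} : ℝ) * (y * orbitGF ι {a // a ∉ S} y) =
        numTransitive ι (Fin S.card) * (y * orbitGF ι (Fin (n + 1 - S.card)) y) := by
    rw [numTransitive_congr ι (Fintype.equivFinOfCardEq (Fintype.card_coe S)),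
      orbitGF_congr ι (Fintype.equivFinOfCardEq (n := n + 1 - S.card)
        (by rw [Fintype.card_subtype_compl, Fintype.card_fin, Fintype.card_coe]))]
  rw [orbitGF_eq_sum_orbitOf 0, Finset.sum_congr rfl fun S _ => hterm S.1,
    sum_finset_of_mem 0 fun k =>
      (numTransitive ι (Fin k) : ℝ) * (y * orbitGF ι (Fin (n + 1 - k)) y),
    Fintype.card_fin, Finset.mul_sum]
  refine Finset.sum_congr rfl fun k _ => ?_
  rw [nsmul_eq_mul, Nat.add_sub_cancel, Nat.add_sub_add_right]
  ring

end Recursion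

/-! ### Counting transitive commuting families -/

section TransitiveLowerBound

open Equiv

variable {α : Type*} {r : ℕ}

lemma isCommuting_cons_pow (c : Perm α) (e : Fin r → ℕ) :
    IsCommuting (Fin.cons c fun i => c ^ e i : Fin (r + 1) → Perm α) := by
  have hpow : ∀ i, ∃ m : ℕ, (Fin.cons c fun i => c ^ e i : Fin (r + 1) → Perm α) i = c ^ m :=
    Fin.cases ⟨1, by simp⟩ fun i => ⟨e i, by simp⟩
  intro i j
  obtain ⟨a, ha⟩ := hpow i
  obtain ⟨b, hb⟩ := hpow j
  rw [ha, hb]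
  exact Commute.pow_pow_self c a b

lemma isTransitive_cons_of_isCycleOn {c : Perm α} (hc : c.IsCycleOn Set.univ)
    (τ : Fin r → Perm α) : IsTransitive (Fin.cons c τ : Fin (r + 1) → Perm α) := by
  refine ⟨Quot.ind fun a => Quot.ind fun b => ?_⟩
  obtain ⟨m, rfl⟩ := hc.2 (Set.mem_univ a) (Set.mem_univ b)
  have hc_mem : c ∈ Set.range (Fin.cons c τ : Fin (r + 1) → Perm α) := ⟨0, rfl⟩
  have hmem := zpow_mem (Subgroup.subset_closure hc_mem) m
  exact (OrbitSpace.mk_apply_of_mem_closure _ hmem a).symm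

lemma isCycleOn_univ_of_cycleType_eq [Fintype α] [DecidableEq α] {c : Perm α}
    (hc : c.cycleType = {Fintype.card α}) : c.IsCycleOn Set.univ := by
  have hcycle : c.IsCycle := Perm.card_cycleType_eq_one.1 (by rw [hc, Multiset.card_singleton])
  have hsupport : c.support = Finset.univ := by
    rw [← Finset.card_eq_iff_eq_univ, ← c.sum_cycleType, hc, Multiset.sum_singleton]
  have hmoved : {a | c a ≠ a} = Set.univ := by
    rw [← Perm.coe_support_eq_set_support, hsupport, Finset.coe_univ]
  exact hmoved ▸ hcycle.isCycleOn

lemma card_cycleType_eq_singleton_fin {k : ℕ} (hk : 0 < k) :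
    Nat.card {c : Perm (Fin (k + 1)) // c.cycleType = {k + 1}} = k.factorial := by
  rw [Nat.card_eq_fintype_card, Fintype.card_subtype,
    Perm.card_of_cycleType_singleton (by lia) (Fintype.card_fin _).ge]
  simp

lemma factorial_mul_pow_le_numTransitive_fin (r k : ℕ) :
    k.factorial * (k + 1) ^ r ≤ numTransitive (Fin (r + 1)) (Fin (k + 1)) := by
  obtain rfl | hk := k.eq_zero_or_pos
  · have : Nonempty (TransitiveCommutingFamily (Fin (r + 1)) (Fin 1)) :=
      ⟨⟨fun _ => 1, fun _ _ => Commute.refl 1, isTransitive_of_forall_mk_eq 0 fun a => by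
        rw [Subsingleton.elim a 0]⟩⟩
    simp [numTransitive]
  let F (x : {c : Perm (Fin (k + 1)) // c.cycleType = {k + 1}} × (Fin r → Fin (k + 1))) :
      TransitiveCommutingFamily (Fin (r + 1)) (Fin (k + 1)) :=
    ⟨Fin.cons x.1.1 fun i => x.1.1 ^ (x.2 i : ℕ), isCommuting_cons_pow _ _,
      isTransitive_cons_of_isCycleOn
        (isCycleOn_univ_of_cycleType_eq (by rw [x.1.2, Fintype.card_fin])) _⟩
  have hF : Function.Injective F := by
    rintro ⟨⟨c, hc⟩, e⟩ ⟨⟨c', hc'⟩, e'⟩ h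
    have horder : orderOf c = k + 1 := by
      rw [← c.lcm_cycleType, hc, Multiset.lcm_singleton, normalize_eq]
    have h' : (Fin.cons c fun i => c ^ (e i : ℕ) : Fin (r + 1) → Perm (Fin (k + 1))) =
      Fin.cons c' fun i => c' ^ (e' i : ℕ) := congrArg Subtype.val h
    obtain ⟨rfl, he⟩ := Fin.cons_inj.1 h'
    refine Prod.ext rfl (funext fun i => Fin.ext ?_)
    exact pow_injOn_Iio_orderOf ((e i).is_lt.trans_eq horder.symm)
      ((e' i).is_lt.trans_eq horder.symm) (congrFun he i)
  have hcard := Nat.card_le_card_of_injective F hF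
  rw [Nat.card_prod, card_cycleType_eq_singleton_fin hk] at hcard
  simpa [numTransitive] using hcard

end TransitiveLowerBound

section TransitiveUpperBound

open Equiv

/-- The number of subgroups of `G` of index `m`; it is `0` if there are infinitely many. -/
noncomputable def subgroupCount (G : Type*) [Group G] (m : ℕ) : ℕ :=
  Nat.card {H : Subgroup G // H.index = m}

variable {G α : Type*} [Group G]

/-- Homomorphisms `G → Perm α` whose associated action is transitive. -/
abbrev TransitiveHom (G α : Type*) [Group G] : Type _ :=
  {φ : G →* Perm α // ∀ a b, ∃ g, φ g a = b}

lemma TransitiveHom.exists_quotient_equiv (φ : TransitiveHom G α) (a : α) :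
    ∃ (H : Subgroup G) (e : G ⧸ H ≃ α),
      e (1 : G) = a ∧ ∀ g h : G, φ.1 g (e h) = e (g * h : G) := by
  let : MulAction G α := MulAction.compHom α φ.1
  have hsurj : Function.Surjective (MulAction.ofQuotientStabilizer G a) := fun b =>
    let ⟨g, hg⟩ := φ.2 a b; ⟨g, hg⟩
  exact ⟨_, Equiv.ofBijective _ ⟨MulAction.injective_ofQuotientStabilizer G a, hsurj⟩,
    one_smul G a, fun g h => (mul_smul g h a).symm⟩

lemma nonempty_quotient_equiv_of_index_eq [Finite α] [Nonempty α] {H : Subgroup G}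
    (hH : H.index = Nat.card α) : Nonempty (G ⧸ H ≃ α) := by
  have : Finite (G ⧸ H) :=
    Nat.finite_of_card_ne_zero (hH.trans_ne Nat.card_pos.ne')
  exact ⟨(Finite.equivFin _).trans ((finCongr hH).trans (Finite.equivFin α).symm)⟩

lemma exists_injective_of_transitiveHom (G α : Type*) [Group G] [Finite α] [Nonempty α] :
    ∃ F : α × TransitiveHom G α → {H : Subgroup G // H.index = Nat.card α} × Perm α,
      Function.Injective F := by
  let χ (H : {H : Subgroup G // H.index = Nat.card α}) : G ⧸ H.1 ≃ α :=
    (nonempty_quotient_equiv_of_index_eq H.2).some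
  have hdata (x : α × TransitiveHom G α) :
      ∃ d : {H : Subgroup G // H.index = Nat.card α} × Perm α,
        d.2 (χ d.1 (1 : G)) = x.1 ∧
          ∀ g h : G, x.2.1 g (d.2 (χ d.1 h)) = d.2 (χ d.1 (g * h : G)) := by
    obtain ⟨H, e, he_one, he_mul⟩ := x.2.exists_quotient_equiv x.1
    refine ⟨(⟨H, Nat.card_congr e⟩, (χ ⟨H, Nat.card_congr e⟩).symm.trans e), ?_, fun g h => ?_⟩
    · simpa only [Equiv.trans_apply, Equiv.symm_apply_apply] using he_one
    · simpa only [Equiv.trans_apply, Equiv.symm_apply_apply] using he_mul g h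
  choose F hF_one hF_mul using hdata
  refine ⟨F, fun x x' h => Prod.ext ?_ (Subtype.ext (MonoidHom.ext fun g => Equiv.ext fun b => ?_))⟩
  · rw [← hF_one x, h, hF_one]
  · obtain ⟨q, rfl⟩ := ((χ (F x).1).trans (F x).2).surjective b
    induction q using QuotientGroup.induction_on with
    | _ k => rw [Equiv.trans_apply, hF_mul, h, hF_mul]

variable {ι : Type*} [Fintype ι]

/-- The homomorphism `ℤ ^ ι → Perm α` which sends the standard generators to a commuting family. -/
noncomputable def CommutingFamily.toHom (σ : CommutingFamily ι α) :
    (ι → Multiplicative ℤ) →* Perm α :=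
  MonoidHom.noncommPiCoprod (fun i => zpowersHom _ (σ.1 i)) fun i j _ _ _ =>
    (σ.2 i j).zpow_zpow _ _

lemma CommutingFamily.toHom_mulSingle [DecidableEq ι] (σ : CommutingFamily ι α) (i : ι) :
    σ.toHom (Pi.mulSingle i (Multiplicative.ofAdd 1)) = σ.1 i := by
  refine (MonoidHom.noncommPiCoprod_mulSingle (fun i => zpowersHom _ (σ.1 i)) i _).trans ?_
  simp

lemma CommutingFamily.toHom_injective :
    Function.Injective (CommutingFamily.toHom : CommutingFamily ι α → _) := by
  classical
  intro σ τ h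
  refine Subtype.ext (funext fun i => ?_)
  rw [← toHom_mulSingle σ i, h, toHom_mulSingle]

lemma CommutingFamily.exists_toHom_apply_eq (σ : CommutingFamily ι α) (hσ : IsTransitive σ.1)
    (a b : α) : ∃ g, σ.toHom g a = b := by
  classical
  let : MulAction (ι → Multiplicative ℤ) α := MulAction.compHom α σ.toHom
  let orbit : OrbitSpace σ.1 → MulAction.orbitRel.Quotient (ι → Multiplicative ℤ) α :=
    Quot.lift (fun a => Quotient.mk _ a) <| by
      rintro a _ ⟨i, rfl⟩
      refine (Quotient.sound ?_).symm
      exact ⟨Pi.mulSingle i (Multiplicative.ofAdd 1), congrArg (· a) (σ.toHom_mulSingle i)⟩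
  exact Quotient.exact (congrArg orbit (hσ.elim (Quot.mk _ b) (Quot.mk _ a)))

lemma card_mul_numTransitive_le (ι α : Type*) [Finite ι] [Finite α] [Nonempty α]
    [Finite {H : Subgroup (ι → Multiplicative ℤ) // H.index = Nat.card α}] :
    Nat.card α * numTransitive ι α ≤
      (Nat.card α).factorial * subgroupCount (ι → Multiplicative ℤ) (Nat.card α) := by
  have : Fintype ι := Fintype.ofFinite ι
  obtain ⟨F, hF⟩ := exists_injective_of_transitiveHom (ι → Multiplicative ℤ) α
  let hom (σ : TransitiveCommutingFamily ι α) : TransitiveHom (ι → Multiplicative ℤ) α :=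
    ⟨CommutingFamily.toHom ⟨σ.1, σ.2.1⟩, CommutingFamily.exists_toHom_apply_eq _ σ.2.2⟩
  have hom_injective : Function.Injective hom := fun σ τ h =>
    Subtype.ext (congrArg (fun ρ : CommutingFamily ι α => ρ.1)
      (CommutingFamily.toHom_injective (congrArg Subtype.val h)))
  have hcard := Nat.card_le_card_of_injective _
    (hF.comp (Function.Injective.prodMap Function.injective_id hom_injective))
  rwa [Nat.card_prod, Nat.card_prod, Nat.card_perm, mul_comm (Nat.card {H // _})] at hcard

end TransitiveUpperBound

section SubgroupCount

open Multiplicative (ofAdd)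

lemma eq_zpowers_ofAdd_index (D : Subgroup (Multiplicative ℤ)) :
    D = Subgroup.zpowers (ofAdd (D.index : ℤ)) := by
  obtain ⟨D, rfl⟩ := AddSubgroup.toSubgroup.surjective D
  obtain ⟨d, rfl⟩ := Int.subgroup_cyclic D
  rw [← AddSubgroup.zmultiples_eq_closure, AddSubgroup.index_toSubgroup, Int.index_zmultiples,
    ← Int.zmultiples_natAbs]
  rfl

variable {A : Type*} [CommGroup A]

lemma index_map_fst_mul_index_comap_inr {G : Type*} [CommGroup G] (L : Subgroup (G × A)) :
    (L.map (MonoidHom.fst G A)).index * (L.comap (MonoidHom.inr G A)).index = L.index := by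
  have hrange : (MonoidHom.inr G A).range = (MonoidHom.fst G A).ker := by
    ext ⟨g, a⟩
    simp [Subgroup.mem_prod, eq_comm]
  rw [Subgroup.index_map, Subgroup.index_comap, hrange,
    MonoidHom.range_eq_top.2 Prod.fst_surjective, Subgroup.index_top, mul_one,
    mul_comm, ← Subgroup.relIndex_sup_right, sup_comm, Subgroup.relIndex_mul_index le_sup_left]

lemma index_map_fst_eq_of_comap_inr_eq {G : Type*} [CommGroup G] {L L' : Subgroup (G × A)}
    (hindex : L.index = L'.index) (hne : L.index ≠ 0)
    (hinr : L.comap (MonoidHom.inr G A) = L'.comap (MonoidHom.inr G A)) :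
    (L.map (MonoidHom.fst G A)).index = (L'.map (MonoidHom.fst G A)).index := by
  have hmul := index_map_fst_mul_index_comap_inr L
  refine mul_right_cancel₀ (right_ne_zero_of_mul (hmul.trans_ne hne)) ?_
  rw [hmul, hinr, index_map_fst_mul_index_comap_inr, hindex]

lemma exists_ofAdd_mem (L : Subgroup (Multiplicative ℤ × A)) :
    ∃ v, (ofAdd ((L.map (MonoidHom.fst _ A)).index : ℤ), v) ∈ L := by
  have hmem : ofAdd ((L.map (MonoidHom.fst _ A)).index : ℤ) ∈ L.map (MonoidHom.fst _ A) := by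
    exact (eq_zpowers_ofAdd_index (L.map (MonoidHom.fst _ A))).ge (Subgroup.mem_zpowers _)
  obtain ⟨⟨_, v⟩, hv, rfl⟩ := hmem
  exact ⟨v, hv⟩

lemma le_of_zpowers_of_mem {G : Type*} [CommGroup G] {L L' : Subgroup (G × A)} {g : G} {v : A}
    (hfst : L.map (MonoidHom.fst G A) ≤ Subgroup.zpowers g)
    (hinr : L.comap (MonoidHom.inr G A) ≤ L'.comap (MonoidHom.inr G A))
    (hL : (g, v) ∈ L) (hL' : (g, v) ∈ L') : L ≤ L' := by
  rintro ⟨_, a⟩ ha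
  obtain ⟨k, rfl⟩ := hfst ⟨_, ha, rfl⟩
  have hsplit : (g ^ k, a) = (g, v) ^ k * (MonoidHom.inr G A ((v ^ k)⁻¹ * a)) := by simp
  have hrest : (v ^ k)⁻¹ * a ∈ L'.comap (MonoidHom.inr G A) := by
    refine hinr (Subgroup.mem_comap.2 ?_)
    rwa [← L.mul_mem_cancel_left (zpow_mem hL k), ← hsplit]
  change (g ^ k, a) ∈ L'
  rw [hsplit]
  exact mul_mem (zpow_mem hL' k) hrest

/-- A subgroup `L` of `ℤ × A` of index `m` is determined by its intersection `K` with `A`, of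
index `e` say, and by the coset of `K` formed by the `v : A` with `(m / e, v) ∈ L`. -/
abbrev SubgroupData (A : Type*) [CommGroup A] (m : ℕ) : Type _ :=
  Σ e : m.divisors, Σ K : {K : Subgroup A // K.index = e.1}, A ⧸ K.1

lemma exists_injective_subgroupData (A : Type*) [CommGroup A] {m : ℕ} (hm : m ≠ 0) :
    ∃ F : {L : Subgroup (Multiplicative ℤ × A) // L.index = m} → SubgroupData A m,
      Function.Injective F := by
  have hdata (L : {L : Subgroup (Multiplicative ℤ × A) // L.index = m}) :
      ∃ d : SubgroupData A m, L.1.comap (MonoidHom.inr _ A) = d.2.1.1 ∧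
        ∃ v : A, (ofAdd ((L.1.map (MonoidHom.fst _ A)).index : ℤ), v) ∈ L.1 ∧
          QuotientGroup.mk v = d.2.2 := by
    obtain ⟨L, hL⟩ := L
    obtain ⟨v, hv⟩ := exists_ofAdd_mem L
    have hmul := (index_map_fst_mul_index_comap_inr L).trans hL
    have he : (L.comap (MonoidHom.inr _ A)).index ∈ m.divisors :=
      Nat.mem_divisors.2 ⟨Dvd.intro_left _ hmul, hm⟩
    exact ⟨⟨⟨_, he⟩, ⟨_, rfl⟩, QuotientGroup.mk v⟩, rfl, v, hv, rfl⟩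
  choose F hF_comap v hv_mem hv_mk using hdata
  have hle : ∀ L L', F L = F L' → L.1 ≤ L'.1 := fun L L' h => by
    have hcomap : L.1.comap (MonoidHom.inr _ A) = L'.1.comap (MonoidHom.inr _ A) := by
      rw [hF_comap, h, hF_comap]
    have hindex := index_map_fst_eq_of_comap_inr_eq (L.2.trans L'.2.symm) (L.2.trans_ne hm) hcomap
    have hmk := hv_mk L
    rw [h] at hmk
    have hquot : (v L')⁻¹ * v L ∈ L'.1.comap (MonoidHom.inr _ A) := by
      rw [hF_comap]
      exact QuotientGroup.eq.1 ((hv_mk L').trans hmk.symm)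
    refine le_of_zpowers_of_mem (eq_zpowers_ofAdd_index _).le hcomap.le (hv_mem L) ?_
    rw [hindex]
    simpa using mul_mem (hv_mem L') (Subgroup.mem_comap.1 hquot)
  exact ⟨F, fun L L' h => Subtype.ext ((hle L L' h).antisymm (hle L' L h.symm))⟩

instance finite_subgroupData {m : ℕ} [∀ e : m.divisors, Finite {K : Subgroup A // K.index = e.1}] :
    Finite (SubgroupData A m) := by
  have (e : m.divisors) (K : {K : Subgroup A // K.index = e.1}) : Finite (A ⧸ K.1) :=
    Nat.finite_of_card_ne_zero (K.2.trans_ne (Nat.pos_of_mem_divisors e.2).ne')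
  infer_instance

lemma card_subgroupData {m : ℕ} [∀ e : m.divisors, Finite {K : Subgroup A // K.index = e.1}] :
    Nat.card (SubgroupData A m) = ∑ e ∈ m.divisors, e * subgroupCount A e := by
  have (e : m.divisors) : Fintype {K : Subgroup A // K.index = e.1} := Fintype.ofFinite _
  have (e : m.divisors) (K : {K : Subgroup A // K.index = e.1}) : Finite (A ⧸ K.1) :=
    Nat.finite_of_card_ne_zero (K.2.trans_ne (Nat.pos_of_mem_divisors e.2).ne')
  have hquot (e : m.divisors) (K : {K : Subgroup A // K.index = e.1}) : Nat.card (A ⧸ K.1) = e :=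
    K.2
  rw [Nat.card_sigma, ← Finset.sum_coe_sort m.divisors fun e => e * subgroupCount A e]
  refine Finset.sum_congr rfl fun e _ => ?_
  rw [Nat.card_sigma, Finset.sum_congr rfl fun K _ => hquot e K, Finset.sum_const, smul_eq_mul,
    Finset.card_univ, ← Nat.card_eq_fintype_card, mul_comm, subgroupCount]

/-- The isomorphism `G × Gⁿ ≃ Gⁿ⁺¹`. -/
def consMulEquiv (G : Type*) [Mul G] (n : ℕ) : G × (Fin n → G) ≃* (Fin (n + 1) → G) where
  __ := Fin.consEquiv fun _ => G
  map_mul' x y := by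
    refine funext (Fin.cases ?_ fun i => ?_) <;> rfl

lemma exists_injective_subgroupData_fin_succ (ℓ : ℕ) {m : ℕ} (hm : m ≠ 0) :
    ∃ F : {L : Subgroup (Fin (ℓ + 1) → Multiplicative ℤ) // L.index = m} →
      SubgroupData (Fin ℓ → Multiplicative ℤ) m, Function.Injective F := by
  obtain ⟨F, hF⟩ := exists_injective_subgroupData (Fin ℓ → Multiplicative ℤ) hm
  let e := consMulEquiv (Multiplicative ℤ) ℓ
  have hindex (L : {L : Subgroup (Fin (ℓ + 1) → Multiplicative ℤ) // L.index = m}) :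
      (L.1.comap e.toMonoidHom).index = m := by
    rw [Subgroup.index_comap_of_surjective _ e.surjective, L.2]
  refine ⟨fun L => F ⟨_, hindex L⟩, fun L L' h => Subtype.ext ?_⟩
  exact Subgroup.comap_injective e.surjective (congrArg Subtype.val (hF h))

instance finite_subgroup_index_eq (ℓ m : ℕ) [NeZero m] :
    Finite {L : Subgroup (Fin ℓ → Multiplicative ℤ) // L.index = m} := by
  induction ℓ generalizing m with
  | zero => infer_instance
  | succ ℓ ih =>
    have (e : m.divisors) : NeZero e.1 := ⟨(Nat.pos_of_mem_divisors e.2).ne'⟩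
    obtain ⟨F, hF⟩ := exists_injective_subgroupData_fin_succ ℓ (NeZero.ne m)
    exact Finite.of_injective F hF

lemma subgroupCount_fin_succ_le (ℓ m : ℕ) [NeZero m] :
    subgroupCount (Fin (ℓ + 1) → Multiplicative ℤ) m ≤
      ∑ e ∈ m.divisors, e * subgroupCount (Fin ℓ → Multiplicative ℤ) e := by
  have (e : m.divisors) : NeZero e.1 := ⟨(Nat.pos_of_mem_divisors e.2).ne'⟩
  obtain ⟨F, hF⟩ := exists_injective_subgroupData_fin_succ ℓ (NeZero.ne m)
  exact (Nat.card_le_card_of_injective F hF).trans_eq card_subgroupData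

lemma subgroupCount_of_subsingleton_le (G : Type*) [Group G] [Subsingleton G] (m : ℕ) :
    subgroupCount G m ≤ if m = 1 then 1 else 0 := by
  split_ifs with hm
  · exact Finite.card_le_one_iff_subsingleton.2 inferInstance
  · have : IsEmpty {H : Subgroup G // H.index = m} :=
      ⟨fun H => hm (H.2 ▸ Subgroup.index_eq_one.2 (Subsingleton.elim _ _))⟩
    exact Nat.card_of_isEmpty.le

lemma subgroupCount_fin_one_le (m : ℕ) [NeZero m] :
    subgroupCount (Fin 1 → Multiplicative ℤ) m ≤ 1 := by
  refine (subgroupCount_fin_succ_le 0 m).trans ?_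
  refine (Finset.sum_le_sum fun e _ =>
    Nat.mul_le_mul_left e (subgroupCount_of_subsingleton_le _ e)).trans ?_
  simp [NeZero.ne m]

end SubgroupCount

/-! ### Exponential sums with polynomial growth at the origin -/

section ExpSum

/-- `∑_{m ≥ 1} b m e^{-mt} = O(t^{-κ})`, uniformly in `t > 0`. The sum is taken in `ℝ≥0∞`, so that
convergence is part of the bound. -/
def HasExpSumBound (b : ℕ → ℝ) (κ : ℕ) : Prop :=
  ∃ C > 0, ∀ t > 0,
    ∑' m : ℕ+, ENNReal.ofReal (b m * exp (-(m : ℝ) * t)) ≤ ENNReal.ofReal (C / t ^ κ)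

lemma HasExpSumBound.mono {b c : ℕ → ℝ} {κ : ℕ} (hc : HasExpSumBound c κ)
    (hbc : ∀ m : ℕ+, b m ≤ c m) : HasExpSumBound b κ := by
  obtain ⟨C, hC, hbound⟩ := hc
  refine ⟨C, hC, fun t ht => le_trans (ENNReal.tsum_le_tsum fun m => ?_) (hbound t ht)⟩
  gcongr
  exact hbc m

lemma HasExpSumBound.exists_tsum_le {b : ℕ → ℝ} {κ : ℕ} (hb : HasExpSumBound b κ)
    (b_zero : b 0 = 0) (b_nonneg : ∀ m, 0 ≤ b m) :
    ∃ C > 0, ∀ t > 0, Summable (fun m : ℕ => b m * exp (-(m : ℝ) * t)) ∧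
      ∑' m : ℕ, b m * exp (-(m : ℝ) * t) ≤ C / t ^ κ := by
  obtain ⟨C, hC, hbound⟩ := hb
  refine ⟨C, hC, fun t ht => ?_⟩
  have term_nonneg : ∀ m : ℕ, 0 ≤ b m * exp (-(m : ℝ) * t) :=
    fun m => mul_nonneg (b_nonneg m) (exp_pos _).le
  have le_bound : ∑' m : ℕ, ENNReal.ofReal (b m * exp (-(m : ℝ) * t)) ≤
      ENNReal.ofReal (C / t ^ κ) := by
    rw [tsum_eq_zero_add' ENNReal.summable, b_zero, zero_mul, ENNReal.ofReal_zero, zero_add,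
      ← tsum_pnat_eq_tsum_succ (f := fun m : ℕ => ENNReal.ofReal (b m * exp (-(m : ℝ) * t)))]
    exact hbound t ht
  have hsum : Summable (fun m : ℕ => b m * exp (-(m : ℝ) * t)) :=
    (ENNReal.summable_toReal (ne_top_of_le_ne_top ENNReal.ofReal_ne_top le_bound)).congr
      fun m => ENNReal.toReal_ofReal (term_nonneg m)
  rw [← ENNReal.ofReal_tsum_of_nonneg term_nonneg hsum,
    ENNReal.ofReal_le_ofReal_iff (by positivity)] at le_bound
  exact ⟨hsum, le_bound⟩

lemma hasSum_exp_neg_succ_mul {t : ℝ} (ht : 0 < t) :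
    HasSum (fun m : ℕ => exp (-((m : ℝ) + 1) * t)) (exp t - 1)⁻¹ := by
  have ratio_lt : exp (-t) < 1 := exp_lt_one_iff.2 (neg_neg_of_pos ht)
  have tsum_eq : exp (-t) * (1 - exp (-t))⁻¹ = (exp t - 1)⁻¹ := by
    have : exp t - 1 ≠ 0 := (sub_pos.2 (one_lt_exp_iff.2 ht)).ne'
    rw [exp_neg]
    field_simp
  rw [← tsum_eq]
  refine ((hasSum_geometric_of_lt_one (exp_pos _).le ratio_lt).mul_left _).congr_fun fun m => ?_
  rw [← exp_nat_mul, ← exp_add]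
  ring_nf

lemma pow_mul_exp_neg_mul_le (k : ℕ) {v t : ℝ} (hv : 0 ≤ v) (ht : 0 < t) :
    v ^ k * exp (-v * t) ≤ k.factorial * (2 / t) ^ k * exp (-v * (t / 2)) := by
  have pow_le := Real.pow_div_factorial_le_exp (x := v * (t / 2)) (by positivity) k
  rw [div_le_iff₀ (by positivity)] at pow_le
  calc v ^ k * exp (-v * t)
      = (2 / t) ^ k * (v * (t / 2)) ^ k * exp (-v * t) := by
        rw [← mul_pow]
        congr 2
        field_simp
    _ ≤ (2 / t) ^ k * (exp (v * (t / 2)) * k.factorial) * exp (-v * t) := by gcongr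
    _ = k.factorial * (2 / t) ^ k * (exp (v * (t / 2)) * exp (-v * t)) := by ring
    _ = k.factorial * (2 / t) ^ k * exp (-v * (t / 2)) := by
        rw [← exp_add]
        ring_nf

lemma hasExpSumBound_pow (k : ℕ) : HasExpSumBound (fun m => (m : ℝ) ^ k) (k + 1) := by
  refine ⟨k.factorial * 2 ^ (k + 1), by positivity, fun t ht => ?_⟩
  rw [tsum_pnat_eq_tsum_succ (f := fun m : ℕ => ENNReal.ofReal ((m : ℝ) ^ k * exp (-(m : ℝ) * t)))]
  have hsum := (hasSum_exp_neg_succ_mul (half_pos ht)).mul_left (k.factorial * (2 / t) ^ k)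
  calc ∑' m : ℕ, ENNReal.ofReal (((m + 1 : ℕ) : ℝ) ^ k * exp (-((m + 1 : ℕ) : ℝ) * t))
      ≤ ∑' m : ℕ, ENNReal.ofReal (k.factorial * (2 / t) ^ k * exp (-((m : ℝ) + 1) * (t / 2))) := by
        refine ENNReal.tsum_le_tsum fun m => ENNReal.ofReal_le_ofReal ?_
        push_cast
        exact pow_mul_exp_neg_mul_le k (by positivity) ht
    _ = ENNReal.ofReal (k.factorial * (2 / t) ^ k * (exp (t / 2) - 1)⁻¹) := by
        rw [← ENNReal.ofReal_tsum_of_nonneg (fun m => by positivity) hsum.summable, hsum.tsum_eq]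
    _ ≤ ENNReal.ofReal (k.factorial * (2 / t) ^ k * (t / 2)⁻¹) := by
        gcongr
        linarith [add_one_le_exp (t / 2)]
    _ = ENNReal.ofReal (k.factorial * 2 ^ (k + 1) / t ^ (k + 1)) := by
        congr 1
        rw [inv_div, mul_assoc, ← pow_succ, div_pow, mul_div_assoc]

lemma tsum_sum_divisorsAntidiagonal (F : ℕ → ℕ → ENNReal) :
    ∑' m : ℕ+, ∑ de ∈ (m : ℕ).divisorsAntidiagonal, F de.1 de.2 = ∑' d : ℕ+, ∑' e : ℕ+, F d e := by
  simp_rw [← Finset.tsum_subtype (Nat.divisorsAntidiagonal _) fun de : ℕ × ℕ => F de.1 de.2]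
  rw [← ENNReal.tsum_sigma' (f := fun p : (Σ n : ℕ+, Nat.divisorsAntidiagonal n) =>
    F p.2.1.1 p.2.1.2), ← sigmaAntidiagonalEquivProd.symm.tsum_eq, ENNReal.tsum_prod']
  rfl

/-- Since `e^{-det} = e^{-e(dt)}`, a Dirichlet convolution inherits the bound of `c` at `dt`,
weighted by `u d`. -/
lemma HasExpSumBound.of_le_dirichlet_convolution {b c u : ℕ → ℝ} {κ : ℕ}
    (hc : HasExpSumBound c κ) (c_nonneg : ∀ m, 0 ≤ c m) (u_nonneg : ∀ d, 0 ≤ u d)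
    (u_summable : Summable fun d : ℕ+ => u d / (d : ℝ) ^ κ)
    (hb : ∀ m : ℕ+, b m ≤ ∑ de ∈ (m : ℕ).divisorsAntidiagonal, u de.1 * c de.2) :
    HasExpSumBound b κ := by
  obtain ⟨C, hC, hbound⟩ := hc
  have tsum_nonneg : 0 ≤ ∑' d : ℕ+, u d / (d : ℝ) ^ κ :=
    tsum_nonneg fun d => div_nonneg (u_nonneg d) (by positivity)
  refine ⟨C * (1 + ∑' d : ℕ+, u d / (d : ℝ) ^ κ), by positivity, fun t ht => ?_⟩
  calc ∑' m : ℕ+, ENNReal.ofReal (b m * exp (-(m : ℝ) * t))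
      ≤ ∑' m : ℕ+, ∑ de ∈ (m : ℕ).divisorsAntidiagonal,
          ENNReal.ofReal (u de.1 * (c de.2 * exp (-(de.2 : ℝ) * (de.1 * t)))) := by
        refine ENNReal.tsum_le_tsum fun m => ?_
        rw [← ENNReal.ofReal_sum_of_nonneg fun de _ =>
          mul_nonneg (u_nonneg _) (mul_nonneg (c_nonneg _) (exp_pos _).le)]
        refine ENNReal.ofReal_le_ofReal
          ((mul_le_mul_of_nonneg_right (hb m) (exp_pos _).le).trans_eq ?_)
        rw [Finset.sum_mul]
        refine Finset.sum_congr rfl fun de hde => ?_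
        rw [← (Nat.mem_divisorsAntidiagonal.1 hde).1]
        push_cast
        ring_nf
    _ = ∑' d : ℕ+, ∑' e : ℕ+, ENNReal.ofReal (u d * (c e * exp (-(e : ℝ) * (d * t)))) :=
        tsum_sum_divisorsAntidiagonal fun d e =>
          ENNReal.ofReal (u d * (c e * exp (-(e : ℝ) * (d * t))))
    _ ≤ ∑' d : ℕ+, ENNReal.ofReal (C / t ^ κ * (u d / (d : ℝ) ^ κ)) := by
        refine ENNReal.tsum_le_tsum fun d => ?_
        simp_rw [ENNReal.ofReal_mul (u_nonneg _)]
        rw [ENNReal.tsum_mul_left]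
        refine (mul_le_mul_right (hbound (d * t) (by positivity)) _).trans_eq ?_
        rw [← ENNReal.ofReal_mul (u_nonneg _), mul_pow]
        congr 1
        ring
    _ = ENNReal.ofReal (C / t ^ κ * ∑' d : ℕ+, u d / (d : ℝ) ^ κ) := by
        rw [← ENNReal.ofReal_tsum_of_nonneg
          (fun d => mul_nonneg (by positivity) (div_nonneg (u_nonneg _) (by positivity)))
          (u_summable.mul_left _), tsum_mul_left]
    _ ≤ ENNReal.ofReal (C * (1 + ∑' d : ℕ+, u d / (d : ℝ) ^ κ) / t ^ κ) := by
        rw [mul_div_right_comm]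
        gcongr
        linarith

lemma sum_divisors_eq_sum_dirichlet_convolution (f : ℕ → ℝ) (q : ℕ) (m : ℕ) :
    (m : ℝ) ^ q * ((∑ e ∈ m.divisors, e * f e) / m) =
      ∑ de ∈ m.divisorsAntidiagonal,
        (de.1 : ℝ) ^ q / de.1 * (de.2 ^ (q + 1) * (f de.2 / de.2)) := by
  rw [← Nat.sum_divisorsAntidiagonal' (f := fun _ e => (e * f e : ℝ)), Finset.sum_div,
    Finset.mul_sum]
  refine Finset.sum_congr rfl fun de hde => ?_
  obtain ⟨hmul, hne⟩ := Nat.mem_divisorsAntidiagonal.1 hde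
  rw [← hmul] at hne ⊢
  have hd : (de.1 : ℝ) ≠ 0 := by exact_mod_cast left_ne_zero_of_mul hne
  have he : (de.2 : ℝ) ≠ 0 := by exact_mod_cast right_ne_zero_of_mul hne
  push_cast
  field_simp
  ring

lemma HasExpSumBound.subgroupCount_fin_succ {ℓ κ q : ℕ} (hκ : q < κ)
    (h : HasExpSumBound
      (fun m => (m : ℝ) ^ (q + 1) * (subgroupCount (Fin ℓ → Multiplicative ℤ) m / m)) κ) :
    HasExpSumBound
      (fun m => (m : ℝ) ^ q * (subgroupCount (Fin (ℓ + 1) → Multiplicative ℤ) m / m)) κ := by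
  refine h.of_le_dirichlet_convolution (u := fun d => (d : ℝ) ^ q / d)
    (fun m => by positivity) (fun d => by positivity) ?_ fun m => ?_
  · refine (((Real.summable_one_div_nat_pow (p := κ - q + 1)).2 (by omega)).comp_injective
      PNat.coe_injective).congr fun d => ?_
    have : (d : ℝ) ≠ 0 := by positivity
    obtain ⟨k, rfl⟩ := Nat.exists_eq_add_of_le hκ.le
    simp only [Function.comp_apply, Nat.add_sub_cancel_left]
    field_simp
    ring
  · have : NeZero (m : ℕ) := ⟨m.ne_zero⟩
    refine le_of_le_of_eq ?_ (sum_divisors_eq_sum_dirichlet_convolution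
      (fun e => subgroupCount (Fin ℓ → Multiplicative ℤ) e) q m)
    gcongr
    exact_mod_cast subgroupCount_fin_succ_le ℓ m

lemma hasExpSumBound_subgroupCount (j q : ℕ) :
    HasExpSumBound
      (fun m => (m : ℝ) ^ q * (subgroupCount (Fin (j + 2) → Multiplicative ℤ) m / m))
      (j + 1 + q) := by
  induction j generalizing q with
  | zero =>
    refine HasExpSumBound.subgroupCount_fin_succ (by omega) ?_
    rw [zero_add, add_comm 1 q]
    refine (hasExpSumBound_pow q).mono fun m => ?_
    have : NeZero (m : ℕ) := ⟨m.ne_zero⟩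
    have count_le : (subgroupCount (Fin 1 → Multiplicative ℤ) m : ℝ) ≤ 1 := by
      exact_mod_cast subgroupCount_fin_one_le m
    have : (m : ℝ) ≠ 0 := by positivity
    calc (m : ℝ) ^ (q + 1) * (subgroupCount (Fin 1 → Multiplicative ℤ) m / m)
        ≤ (m : ℝ) ^ (q + 1) * (1 / m) := by gcongr
      _ = (m : ℝ) ^ q := by rw [mul_one_div, pow_succ, mul_div_cancel_right₀ _ this]
  | succ j ih =>
    refine HasExpSumBound.subgroupCount_fin_succ (by omega) ?_
    rw [show j + 1 + 1 + q = j + 1 + (q + 1) by ring]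
    exact ih (q + 1)

end ExpSum

section TransitiveWeight

/-- Growth of order `m ^ r` of a weight sequence: `m ^ r` is a pointwise lower bound, while the
upper bounds are only required on average, through the sums `∑ m ^ q a m e^{-mt}`. -/
structure WeightGrowth (r : ℕ) (a : ℕ → ℝ) : Prop where
  nonneg (m : ℕ) : 0 ≤ a m
  map_zero : a 0 = 0
  pow_le (m : ℕ) : 1 ≤ m → (m : ℝ) ^ r ≤ a m
  hasExpSumBound (q : ℕ) : HasExpSumBound (fun m => (m : ℝ) ^ q * a m) (r + 1 + q)

/-- The coefficients of the exponential generating function of transitive commuting families. The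
value at `0` is set to `0`, since an empty set carries no orbit. -/
noncomputable def transitiveWeight (ℓ m : ℕ) : ℝ :=
  if m = 0 then 0 else numTransitive (Fin ℓ) (Fin m) / m.factorial

lemma transitiveWeight_zero (ℓ : ℕ) : transitiveWeight ℓ 0 = 0 := if_pos rfl

lemma transitiveWeight_of_ne_zero (ℓ : ℕ) {m : ℕ} (hm : m ≠ 0) :
    transitiveWeight ℓ m = numTransitive (Fin ℓ) (Fin m) / m.factorial := if_neg hm

lemma transitiveWeight_le_subgroupCount_div (ℓ m : ℕ) [NeZero m] :
    transitiveWeight ℓ m ≤ subgroupCount (Fin ℓ → Multiplicative ℤ) m / m := by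
  have hle : m * numTransitive (Fin ℓ) (Fin m) ≤
      m.factorial * subgroupCount (Fin ℓ → Multiplicative ℤ) m := by
    have : Finite {H : Subgroup (Fin ℓ → Multiplicative ℤ) // H.index = Nat.card (Fin m)} := by
      rw [Nat.card_fin]
      infer_instance
    simpa only [Nat.card_fin] using card_mul_numTransitive_le (Fin ℓ) (Fin m)
  have hm : 0 < (m : ℝ) := by exact_mod_cast Nat.pos_of_neZero m
  rw [transitiveWeight_of_ne_zero ℓ (NeZero.ne m), div_le_div_iff₀ (by positivity) hm, mul_comm,
    mul_comm (subgroupCount _ _ : ℝ)]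
  exact_mod_cast hle

lemma weightGrowth_transitiveWeight (r : ℕ) : WeightGrowth r (transitiveWeight (r + 2)) where
  nonneg m := by
    unfold transitiveWeight
    split_ifs <;> positivity
  map_zero := transitiveWeight_zero _
  pow_le m hm := by
    obtain ⟨k, rfl⟩ := Nat.exists_eq_add_of_le' hm
    have hle : ((k.factorial * (k + 1) ^ (r + 1) : ℕ) : ℝ) ≤
        numTransitive (Fin (r + 2)) (Fin (k + 1)) :=
      mod_cast factorial_mul_pow_le_numTransitive_fin (r + 1) k
    rw [transitiveWeight_of_ne_zero _ k.succ_ne_zero, le_div_iff₀ (by positivity)]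
    refine le_of_eq_of_le ?_ hle
    push_cast [Nat.factorial_succ]
    ring
  hasExpSumBound q := (hasExpSumBound_subgroupCount r q).mono fun m =>
    have : NeZero (m : ℕ) := ⟨m.ne_zero⟩
    mul_le_mul_of_nonneg_left (transitiveWeight_le_subgroupCount_div _ _) (by positivity)

end TransitiveWeight

/-! ### Cauchy's formula on the circle of radius `e^{-t}` -/

section Cauchy

lemma iteratedDeriv_cexp_const_mul_of_recursion {f : ℂ → ℂ} (hf : AnalyticAt ℂ f 0)
    (f_zero : f 0 = 0) (y : ℂ) {W : ℕ → ℂ} (W_zero : W 0 = 1)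
    (W_succ : ∀ n, W (n + 1) = y * ∑ k ∈ Finset.range (n + 1),
      (n.choose k : ℂ) * (iteratedDeriv (k + 1) f 0 * W (n - k))) (n : ℕ) :
    iteratedDeriv n (fun z => Complex.exp (y * f z)) 0 = W n := by
  have deriv_eq : deriv (fun z => Complex.exp (y * f z)) =ᶠ[𝓝 0]
      fun z => y * (deriv f * fun z => Complex.exp (y * f z)) z := by
    filter_upwards [hf.eventually_analyticAt] with z hz
    rw [(hz.differentiableAt.hasDerivAt.const_mul y).cexp.deriv, Pi.mul_apply]
    ring
  induction n using Nat.strong_induction_on with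
  | _ n ih =>
  rcases n with _ | n
  · simp [W_zero, f_zero]
  · have contDiffAt : ContDiffAt ℂ n (fun z => Complex.exp (y * f z)) 0 :=
      (analyticAt_const.mul hf).cexp.contDiffAt
    rw [iteratedDeriv_succ', deriv_eq.iteratedDeriv_eq, iteratedDeriv_const_mul_field,
      iteratedDeriv_mul hf.deriv.contDiffAt contDiffAt, W_succ]
    congr 1
    refine Finset.sum_congr rfl fun k _ => ?_
    rw [← iteratedDeriv_succ', ih (n - k) (by omega), mul_assoc]

lemma exp_natCast_mul_mul_I_periodic (m : ℕ) :
    Function.Periodic (fun θ : ℝ => Complex.exp (m * θ * Complex.I)) (2 * π) := fun θ =>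
  Complex.exp_eq_exp_iff_exists_int.2 ⟨m, by push_cast; ring⟩

lemma iteratedDeriv_zero_eq_integral_circleMap {f : ℂ → ℂ} {R : ℝ} (hR : 0 < R)
    (hf : DiffContOnCl ℂ f (Metric.ball 0 R)) (n : ℕ) :
    iteratedDeriv n f 0 = (n.factorial / (2 * π * R ^ n) : ℝ) *
      ∫ θ in (-π)..π, f (circleMap 0 R θ) * Complex.exp (-(n * θ * Complex.I)) := by
  have integrand_eq (θ : ℝ) : deriv (circleMap 0 R) θ • (1 / (circleMap 0 R θ - 0) ^ (n + 1)) •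
      f (circleMap 0 R θ) = Complex.I * ((R : ℂ) ^ n)⁻¹ *
        (f (circleMap 0 R θ) * Complex.exp (-(n * θ * Complex.I))) := by
    have hne : circleMap 0 R θ ≠ 0 := circleMap_ne_center hR.ne'
    have pow_eq : circleMap 0 R θ ^ n = R ^ n * Complex.exp (n * θ * Complex.I) := by
      rw [circleMap_zero, mul_pow, ← Complex.exp_nat_mul, mul_assoc]
    rw [deriv_circleMap, sub_zero, smul_eq_mul, smul_eq_mul, pow_succ, pow_eq, Complex.exp_neg]
    field_simp
  have periodic : Function.Periodic
      (fun θ : ℝ => f (circleMap 0 R θ) * Complex.exp (-(n * θ * Complex.I))) (2 * π) := fun θ => by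
    simp only [periodic_circleMap 0 R θ, Complex.exp_neg, exp_natCast_mul_mul_I_periodic n θ]
  have shift := periodic.intervalIntegral_add_eq 0 (-π)
  rw [zero_add, show -π + 2 * π = π by ring] at shift
  have cauchy := hf.circleIntegral_one_div_sub_center_pow_smul hR n
  simp only [circleIntegral, integrand_eq] at cauchy
  rw [intervalIntegral.integral_const_mul, shift, smul_eq_mul] at cauchy
  have hfac : (n.factorial : ℂ) ≠ 0 := mod_cast n.factorial_ne_zero
  have hπ : (π : ℂ) ≠ 0 := mod_cast Real.pi_ne_zero
  have hRn : (R : ℂ) ≠ 0 := mod_cast hR.ne'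
  have hI := Complex.I_ne_zero
  push_cast
  field_simp at cauchy ⊢
  linear_combination -cauchy

/-- The power series `∑ a m z ^ m`. -/
noncomputable def genFun (a : ℕ → ℝ) (z : ℂ) : ℂ := ∑' m : ℕ, (a m : ℂ) * z ^ m

/-- The `q`-th moment of the measure with mass `a m e^{-mt}` at `m`. -/
noncomputable def expMoment (a : ℕ → ℝ) (q : ℕ) (t : ℝ) : ℝ :=
  ∑' m : ℕ, (m : ℝ) ^ q * a m * exp (-(m : ℝ) * t)

/-- The Lévy exponent of the compound Poisson law whose jump measure has mass `a m e^{-mt}`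
at `m`. -/
noncomputable def levyExponent (a : ℕ → ℝ) (t θ : ℝ) : ℂ :=
  ∑' m : ℕ, ((a m * exp (-(m : ℝ) * t) : ℝ) : ℂ) * (Complex.exp (m * θ * Complex.I) - 1)

/-- The angular integral left in Cauchy's formula for the `N`-th coefficient of `exp (y * genFun a)`
once the maximum of the integrand on the circle of radius `e^{-t}` is factored out. -/
noncomputable def saddleIntegral (a : ℕ → ℝ) (y N t : ℝ) : ℂ :=
  ∫ θ in (-π)..π, Complex.exp (y * levyExponent a t θ - N * θ * Complex.I)

variable {a : ℕ → ℝ}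

lemma hasFPowerSeriesOnBall_genFun
    (hsum : ∀ t > 0, Summable fun m : ℕ => |a m| * exp (-(m : ℝ) * t)) :
    HasFPowerSeriesOnBall (genFun a)
      (FormalMultilinearSeries.ofScalars ℂ fun m => (a m : ℂ)) 0 1 := by
  have one_le_radius :
      1 ≤ (FormalMultilinearSeries.ofScalars ℂ fun m => (a m : ℂ)).radius := by
    refine ENNReal.le_of_forall_nnreal_lt fun ρ hρ => ?_
    rcases eq_or_ne ρ 0 with rfl | hρ0
    · exact zero_le
    have ρ_lt_one : (ρ : ℝ) < 1 := by exact_mod_cast hρ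
    have ρ_pos : (0 : ℝ) < ρ := by exact_mod_cast pos_iff_ne_zero.2 hρ0
    refine FormalMultilinearSeries.le_radius_of_summable_norm _
      ((hsum (-Real.log ρ) (neg_pos.2 (Real.log_neg ρ_pos ρ_lt_one))).congr fun m => ?_)
    rw [FormalMultilinearSeries.ofScalars_norm, neg_mul_neg, Real.exp_nat_mul,
      Real.exp_log ρ_pos, Complex.norm_real, Real.norm_eq_abs]
  refine ((FormalMultilinearSeries.hasFPowerSeriesOnBall _
    (one_pos.trans_le one_le_radius)).mono one_pos one_le_radius).congr fun z _ => ?_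
  simp [genFun, FormalMultilinearSeries.sum, mul_comm]

lemma analyticOnNhd_genFun
    (hsum : ∀ t > 0, Summable fun m : ℕ => |a m| * exp (-(m : ℝ) * t)) :
    AnalyticOnNhd ℂ (genFun a) (Metric.ball 0 1) := by
  rw [← Metric.eball_ofReal, ENNReal.ofReal_one]
  exact (hasFPowerSeriesOnBall_genFun hsum).analyticOnNhd

lemma iteratedDeriv_genFun_zero
    (hsum : ∀ t > 0, Summable fun m : ℕ => |a m| * exp (-(m : ℝ) * t)) (n : ℕ) :
    iteratedDeriv n (genFun a) 0 = n.factorial * a n := by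
  have hcoeff := (hasFPowerSeriesOnBall_genFun hsum).factorial_smul 1 n
  rw [iteratedFDeriv_apply_eq_iteratedDeriv_mul_prod, Finset.prod_const_one, one_smul] at hcoeff
  rw [← hcoeff]
  simp

lemma genFun_circleMap {t : ℝ} (hsum : Summable fun m : ℕ => |a m| * exp (-(m : ℝ) * t)) (θ : ℝ) :
    genFun a (circleMap 0 (exp (-t)) θ) = expMoment a 0 t + levyExponent a t θ := by
  have hsumC : Summable fun m : ℕ => ((a m * exp (-(m : ℝ) * t) : ℝ) : ℂ) := by
    refine Summable.of_norm (hsum.congr fun m => ?_)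
    rw [Complex.norm_real, norm_mul, Real.norm_eq_abs, norm_of_nonneg (exp_pos _).le]
  have hsumI : Summable fun m : ℕ =>
      ((a m * exp (-(m : ℝ) * t) : ℝ) : ℂ) * Complex.exp (m * θ * Complex.I) := by
    refine Summable.of_norm (hsum.congr fun m => ?_)
    rw [norm_mul, ← Complex.ofReal_natCast, ← Complex.ofReal_mul, Complex.norm_exp_ofReal_mul_I,
      Complex.norm_real, norm_mul, Real.norm_eq_abs, norm_of_nonneg (exp_pos _).le, mul_one]
  simp only [expMoment, levyExponent, pow_zero, one_mul, mul_sub, mul_one]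
  rw [hsumI.tsum_sub hsumC, Complex.ofReal_tsum, genFun, add_sub_cancel]
  refine tsum_congr fun m => ?_
  rw [circleMap_zero, mul_pow, ← Complex.exp_nat_mul]
  push_cast
  rw [← Complex.exp_nat_mul]
  ring_nf

lemma eq_mul_saddleIntegral_of_recursion
    (hsum : ∀ t > 0, Summable fun m : ℕ => |a m| * exp (-(m : ℝ) * t)) (a_zero : a 0 = 0)
    (y : ℝ) {W : ℕ → ℝ} (W_zero : W 0 = 1)
    (W_succ : ∀ n, W (n + 1) = y * ∑ k ∈ Finset.range (n + 1),
      (n.choose k : ℝ) * (((k + 1).factorial * a (k + 1)) * W (n - k)))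
    (n : ℕ) {t : ℝ} (ht : 0 < t) :
    (W n : ℂ) = (n.factorial / (2 * π) * exp (n * t + y * expMoment a 0 t) : ℝ) *
      saddleIntegral a y n t := by
  have analytic := analyticOnNhd_genFun hsum
  have diffContOnCl : DiffContOnCl ℂ (fun z => Complex.exp (y * genFun a z))
      (Metric.ball 0 (exp (-t))) := by
    refine DifferentiableOn.diffContOnCl fun z hz => ?_
    rw [closure_ball _ (exp_pos _).ne'] at hz
    have hz' := Metric.closedBall_subset_ball (exp_lt_one_iff.2 (neg_neg_of_pos ht)) hz
    exact ((analytic z hz').differentiableAt.const_mul (y : ℂ)).cexp.differentiableWithinAt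
  have coeff : iteratedDeriv n (fun z => Complex.exp (y * genFun a z)) 0 = W n := by
    refine iteratedDeriv_cexp_const_mul_of_recursion (W := fun n => (W n : ℂ))
      (analytic 0 (by simp)) ?_ y (by simp [W_zero]) (fun n => ?_) n
    · simpa [a_zero] using iteratedDeriv_genFun_zero hsum 0
    · simp only [iteratedDeriv_genFun_zero hsum, W_succ]
      push_cast
      rfl
  rw [← coeff, iteratedDeriv_zero_eq_integral_circleMap (exp_pos _) diffContOnCl, saddleIntegral,
    ← intervalIntegral.integral_const_mul, ← intervalIntegral.integral_const_mul]
  refine intervalIntegral.integral_congr fun θ _ => ?_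
  simp only [genFun_circleMap (hsum t ht)]
  rw [← exp_nat_mul, mul_neg, exp_neg, div_mul_eq_div_div, div_inv_eq_mul, mul_add, sub_eq_add_neg]
  push_cast
  simp only [Complex.exp_add]
  ring

end Cauchy

/-! ### Moments of the tilted weights -/

section Scale

lemma le_natCeil_div_mul {c t : ℝ} (ht : 0 < t) : c ≤ ⌈c / t⌉₊ * t :=
  (div_le_iff₀ ht).1 (Nat.le_ceil (c / t))

lemma natCeil_div_mul_le {c t : ℝ} (hc : 0 ≤ c) (ht : 0 < t) : ⌈c / t⌉₊ * t ≤ c + t := by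
  have ceil_le := (Nat.ceil_lt_add_one (div_nonneg hc ht.le)).le
  calc ⌈c / t⌉₊ * t ≤ (c / t + 1) * t := by gcongr
    _ = c + t := by field_simp

lemma half_one_sub_cos_sub_le (α β : ℝ) :
    (1 - cos (β - α)) / 2 ≤ (1 - cos α) + (1 - cos β) := by
  have half_angle (v : ℝ) : 1 - cos v = 2 * sin (v / 2) ^ 2 := by
    rw [sin_sq_eq_half_sub, mul_div_cancel₀ v two_ne_zero]
    ring
  rw [half_angle, half_angle, half_angle, sub_div, Real.sin_sub]
  nlinarith [sq_nonneg (sin (β / 2) * cos (α / 2) + cos (β / 2) * sin (α / 2)),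
    mul_nonneg (sq_nonneg (sin (β / 2))) (sq_nonneg (sin (α / 2))),
    Real.sin_sq_add_cos_sq (α / 2), Real.sin_sq_add_cos_sq (β / 2)]

lemma cos_le_of_one_le_of_le_one_add_pi {v : ℝ} (one_le : 1 ≤ v) (le : v ≤ 1 + π) :
    cos v ≤ 5 / 9 := by
  have pi_gt := Real.pi_gt_three
  rcases le_or_gt v π with h | h
  · exact (cos_le_cos_of_nonneg_of_le_pi zero_le_one h one_le).trans cos_one_le
  · rw [← cos_two_pi_sub]
    exact (cos_le_cos_of_nonneg_of_le_pi zero_le_one (by linarith) (by linarith)).trans cos_one_le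

lemma sq_div_five_le_one_sub_cos {v : ℝ} (hv : |v| ≤ π) : v ^ 2 / 5 ≤ 1 - cos v := by
  have cos_le := Real.cos_le_one_sub_mul_cos_sq hv
  have pi_sq_le : π ^ 2 ≤ 10 := by nlinarith [Real.pi_lt_d2, Real.pi_pos]
  have coeff_le : 1 / 5 ≤ 2 / π ^ 2 := by
    rw [div_le_div_iff₀ (by norm_num) (by positivity)]
    linarith
  nlinarith [mul_le_mul_of_nonneg_right coeff_le (sq_nonneg v)]

/-- If `θ` is at least `t` then the multiple `kθ` closest above `1` is away from `2πℤ`; otherwise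
`kθ` with `k ≈ 1/t` stays below `2` and the quadratic lower bound applies. -/
lemma exists_le_one_sub_cos_natCast_mul {t θ : ℝ} (ht : 0 < t) (ht1 : t ≤ 1) (hθ0 : 0 ≤ θ)
    (hθ : θ ≤ π) :
    ∃ k : ℕ, k ≤ ⌈1 / t⌉₊ ∧ min 1 ((θ / t) ^ 2) / 5 ≤ 1 - cos (k * θ) := by
  rcases le_or_gt t θ with htθ | hθt
  · have hθpos : 0 < θ := ht.trans_le htθ
    refine ⟨⌈1 / θ⌉₊, Nat.ceil_le_ceil (by gcongr), ?_⟩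
    have cos_le := cos_le_of_one_le_of_le_one_add_pi (le_natCeil_div_mul (c := 1) hθpos)
      ((natCeil_div_mul_le zero_le_one hθpos).trans (by gcongr))
    linarith [min_le_left 1 ((θ / t) ^ 2)]
  · refine ⟨⌈1 / t⌉₊, le_rfl, ?_⟩
    have div_le : θ / t ≤ ⌈1 / t⌉₊ * θ := by
      calc θ / t = 1 / t * θ := by ring
        _ ≤ ⌈1 / t⌉₊ * θ := by
          gcongr
          exact Nat.le_ceil _
    have le_two : ⌈1 / t⌉₊ * θ ≤ 2 := by
      calc ⌈1 / t⌉₊ * θ ≤ ⌈1 / t⌉₊ * t := by gcongr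
        _ ≤ 2 := by linarith [natCeil_div_mul_le zero_le_one ht]
    calc min 1 ((θ / t) ^ 2) / 5 ≤ (⌈1 / t⌉₊ * θ) ^ 2 / 5 := by
          gcongr
          exact (min_le_right _ _).trans (by gcongr)
      _ ≤ 1 - cos (⌈1 / t⌉₊ * θ) := sq_div_five_le_one_sub_cos <| by
          rw [abs_of_nonneg (by positivity)]
          linarith [Real.pi_gt_three]

/-- Averaging over the pairs `m`, `m + k`, whose angles differ by the fixed amount `kθ`. -/
lemma le_sum_one_sub_cos {t θ : ℝ} (ht : 0 < t) (ht1 : t ≤ 1) (hθ0 : 0 ≤ θ) (hθ : θ ≤ π) :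
    1 / t * (min 1 ((θ / t) ^ 2) / 20) ≤
      ∑ m ∈ Finset.Ico ⌈1 / t⌉₊ (3 * ⌈1 / t⌉₊), (1 - cos (m * θ)) := by
  obtain ⟨k, hk, hcos⟩ := exists_le_one_sub_cos_natCast_mul ht ht1 hθ0 hθ
  have div_le := Nat.le_ceil (1 / t)
  set M := ⌈1 / t⌉₊
  have nonneg (m : ℕ) : 0 ≤ 1 - cos (m * θ) := sub_nonneg.2 (cos_le_one _)
  have pair_ge (m : ℕ) :
      min 1 ((θ / t) ^ 2) / 10 ≤ (1 - cos (m * θ)) + (1 - cos ((m + k : ℕ) * θ)) := by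
    have hpair := half_one_sub_cos_sub_le (m * θ) ((m + k : ℕ) * θ)
    rw [← sub_mul, Nat.cast_add, add_sub_cancel_left] at hpair
    push_cast
    linarith
  have sum_pairs_ge : M * (min 1 ((θ / t) ^ 2) / 10) ≤
      ∑ m ∈ Finset.Ico M (2 * M), ((1 - cos (m * θ)) + (1 - cos ((m + k : ℕ) * θ))) := by
    simpa [two_mul] using
      Finset.card_nsmul_le_sum (Finset.Ico M (2 * M)) _ _ fun m _ => pair_ge m
  have sum_le : ∑ m ∈ Finset.Ico M (2 * M), (1 - cos (m * θ)) ≤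
      ∑ m ∈ Finset.Ico M (3 * M), (1 - cos (m * θ)) :=
    Finset.sum_le_sum_of_subset_of_nonneg (Finset.Ico_subset_Ico le_rfl (by omega))
      fun m _ _ => nonneg m
  have sum_shift_le : ∑ m ∈ Finset.Ico M (2 * M), (1 - cos ((m + k : ℕ) * θ)) ≤
      ∑ m ∈ Finset.Ico M (3 * M), (1 - cos (m * θ)) := by
    rw [Finset.sum_Ico_add' (fun m : ℕ => 1 - cos (m * θ))]
    exact Finset.sum_le_sum_of_subset_of_nonneg (Finset.Ico_subset_Ico (by omega) (by omega))
      fun m _ _ => nonneg m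
  have min_nonneg : 0 ≤ min 1 ((θ / t) ^ 2) := le_min zero_le_one (sq_nonneg _)
  rw [Finset.sum_add_distrib] at sum_pairs_ge
  calc 1 / t * (min 1 ((θ / t) ^ 2) / 20) ≤ M * (min 1 ((θ / t) ^ 2) / 20) := by gcongr
    _ ≤ _ := by linarith

end Scale

/-- The residual of the regression of `1` on `m` for the measure with mass `a m e^{-mt}` at `m`.
Up to the factor `x`, it is the variance of the number of orbits at the saddle point `t`. -/
noncomputable def residualVariance (a : ℕ → ℝ) (t : ℝ) : ℝ :=
  expMoment a 0 t - expMoment a 1 t ^ 2 / expMoment a 2 t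

namespace WeightGrowth

variable {r : ℕ} {a : ℕ → ℝ} {t : ℝ}

lemma exists_expMoment_le_and_summable (H : WeightGrowth r a) (q : ℕ) :
    ∃ C > 0, ∀ t > 0, Summable (fun m : ℕ => (m : ℝ) ^ q * a m * exp (-(m : ℝ) * t)) ∧
      expMoment a q t ≤ C / t ^ (r + 1 + q) :=
  (H.hasExpSumBound q).exists_tsum_le (by rw [H.map_zero, mul_zero])
    fun m => mul_nonneg (by positivity) (H.nonneg m)

lemma exists_expMoment_le (H : WeightGrowth r a) (q : ℕ) :
    ∃ C > 0, ∀ t > 0, expMoment a q t ≤ C / t ^ (r + 1 + q) := by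
  obtain ⟨C, hC, hbound⟩ := H.exists_expMoment_le_and_summable q
  exact ⟨C, hC, fun t ht => (hbound t ht).2⟩

lemma summable_pow_mul (H : WeightGrowth r a) (q : ℕ) (ht : 0 < t) :
    Summable fun m : ℕ => (m : ℝ) ^ q * a m * exp (-(m : ℝ) * t) := by
  obtain ⟨C, -, hbound⟩ := H.exists_expMoment_le_and_summable q
  exact (hbound t ht).1

lemma summable (H : WeightGrowth r a) (ht : 0 < t) :
    Summable fun m : ℕ => a m * exp (-(m : ℝ) * t) := by
  simpa using H.summable_pow_mul 0 ht

lemma mul_exp_nonneg (H : WeightGrowth r a) (t : ℝ) (m : ℕ) : 0 ≤ a m * exp (-(m : ℝ) * t) :=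
  mul_nonneg (H.nonneg m) (exp_pos _).le

lemma expMoment_pos (H : WeightGrowth r a) (q : ℕ) (ht : 0 < t) : 0 < expMoment a q t := by
  refine (H.summable_pow_mul q ht).tsum_pos
    (fun m => mul_nonneg (mul_nonneg (by positivity) (H.nonneg m)) (exp_pos _).le) 1 ?_
  have : 0 < a 1 := lt_of_lt_of_le (by simp) (H.pow_le 1 le_rfl)
  positivity

lemma mul_sum_le_tsum (H : WeightGrowth r a) (ht : 0 < t) {f : ℕ → ℝ} (hf : ∀ m, 0 ≤ f m)
    (hsum : Summable fun m : ℕ => a m * exp (-(m : ℝ) * t) * f m) {s : Finset ℕ} {D : ℝ}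
    (one_le : ∀ m ∈ s, 1 ≤ m * t) (le : ∀ m ∈ s, m * t ≤ D) :
    (1 / t) ^ r * exp (-D) * ∑ m ∈ s, f m ≤ ∑' m : ℕ, a m * exp (-(m : ℝ) * t) * f m := by
  refine le_trans ?_ (hsum.sum_le_tsum s fun m _ => mul_nonneg (H.mul_exp_nonneg t m) (hf m))
  rw [Finset.mul_sum]
  refine Finset.sum_le_sum fun m hm => ?_
  have div_le : 1 / t ≤ m := (div_le_iff₀ ht).2 (one_le m hm)
  have m_pos : 1 ≤ m := Nat.cast_pos.1 ((one_div_pos.2 ht).trans_le div_le)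
  have weight_ge : (1 / t) ^ r ≤ a m := le_trans (by gcongr) (H.pow_le m m_pos)
  have exp_ge : exp (-D) ≤ exp (-(m : ℝ) * t) := exp_le_exp.2 (by linarith [le m hm])
  have := hf m
  have := H.nonneg m
  gcongr

lemma le_tsum_of_le_on_block (H : WeightGrowth r a) (ht : 0 < t) (ht1 : t ≤ 1) {f : ℕ → ℝ}
    (hf : ∀ m, 0 ≤ f m) (hsum : Summable fun m : ℕ => a m * exp (-(m : ℝ) * t) * f m) {c δ : ℝ}
    (hc : 1 ≤ c) (hδ : 0 ≤ δ) (hfδ : ∀ m : ℕ, c ≤ m * t → m * t ≤ 4 * c → δ ≤ f m) :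
    exp (-(4 * c)) * δ / t ^ (r + 1) ≤ ∑' m : ℕ, a m * exp (-(m : ℝ) * t) * f m := by
  have c_le_ceil := le_natCeil_div_mul (c := c) ht
  have ceil_le := natCeil_div_mul_le (zero_le_one.trans hc) ht
  set M := ⌈c / t⌉₊
  have mem_block (m : ℕ) (hm : m ∈ Finset.Ico M (2 * M)) : c ≤ m * t ∧ m * t ≤ 4 * c := by
    obtain ⟨hMm, hm2⟩ := Finset.mem_Ico.1 hm
    have hMm : (M : ℝ) ≤ m := by exact_mod_cast hMm
    have hm2 : (m : ℝ) ≤ 2 * M := by exact_mod_cast hm2.le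
    constructor <;> nlinarith
  have sum_ge : 1 / t * δ ≤ ∑ m ∈ Finset.Ico M (2 * M), f m := by
    have card_nsmul_le := Finset.card_nsmul_le_sum (Finset.Ico M (2 * M)) f δ
      fun m hm => hfδ m (mem_block m hm).1 (mem_block m hm).2
    rw [Nat.card_Ico, show 2 * M - M = M by omega, nsmul_eq_mul] at card_nsmul_le
    refine le_trans ?_ card_nsmul_le
    gcongr
    exact (div_le_iff₀ ht).2 (hc.trans c_le_ceil)
  calc exp (-(4 * c)) * δ / t ^ (r + 1) = (1 / t) ^ r * exp (-(4 * c)) * (1 / t * δ) := by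
        rw [one_div_pow, pow_succ]
        ring
    _ ≤ (1 / t) ^ r * exp (-(4 * c)) * ∑ m ∈ Finset.Ico M (2 * M), f m := by gcongr
    _ ≤ _ := H.mul_sum_le_tsum ht hf hsum (fun m hm => hc.trans (mem_block m hm).1)
        fun m hm => (mem_block m hm).2

lemma exists_le_expMoment (H : WeightGrowth r a) (q : ℕ) :
    ∃ c > 0, ∀ t, 0 < t → t ≤ 1 → c / t ^ (r + 1 + q) ≤ expMoment a q t := by
  refine ⟨exp (-(4 * 1)), exp_pos _, fun t ht ht1 => ?_⟩
  have term_eq (m : ℕ) : (m : ℝ) ^ q * a m * exp (-(m : ℝ) * t) =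
      a m * exp (-(m : ℝ) * t) * (m : ℝ) ^ q := by ring
  have hblock := H.le_tsum_of_le_on_block ht ht1 (f := fun m => (m : ℝ) ^ q) (δ := (1 / t) ^ q)
    (fun m => by positivity) ((H.summable_pow_mul q ht).congr term_eq) le_rfl (by positivity)
    fun m hm _ => pow_le_pow_left₀ (by positivity) ((div_le_iff₀ ht).2 hm) q
  rw [expMoment, tsum_congr term_eq]
  refine le_of_eq_of_le ?_ hblock
  rw [one_div_pow]
  field_simp
  ring

lemma hasSum_residualVariance (H : WeightGrowth r a) (ht : 0 < t) :
    HasSum (fun m : ℕ =>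
      a m * exp (-(m : ℝ) * t) * (1 - expMoment a 1 t / expMoment a 2 t * m) ^ 2)
      (residualVariance a t) := by
  set l := expMoment a 1 t / expMoment a 2 t with hl
  have hne := (H.expMoment_pos 2 ht).ne'
  convert ((H.summable_pow_mul 0 ht).hasSum.add
    ((H.summable_pow_mul 1 ht).hasSum.mul_left (-2 * l))).add
    ((H.summable_pow_mul 2 ht).hasSum.mul_left (l ^ 2)) using 1
  · ext m
    ring
  · change residualVariance a t =
      expMoment a 0 t + -2 * l * expMoment a 1 t + l ^ 2 * expMoment a 2 t
    rw [residualVariance, hl]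
    field_simp
    ring

/-- No slope `l` makes `1 - l m` small both for `m ≈ 1/t` and for `m ≈ 16/t`. -/
lemma exists_le_residualVariance (H : WeightGrowth r a) :
    ∃ c > 0, ∀ t, 0 < t → t ≤ 1 → c / t ^ (r + 1) ≤ residualVariance a t := by
  refine ⟨exp (-(4 * 16)) * (1 / 4), by positivity, fun t ht ht1 => ?_⟩
  have hsum := H.hasSum_residualVariance ht
  set l := expMoment a 1 t / expMoment a 2 t
  rw [← hsum.tsum_eq]
  rcases le_or_gt l (t / 8) with small | large
  · refine le_trans ?_ (H.le_tsum_of_le_on_block ht ht1 (fun m => sq_nonneg (1 - l * m))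
      hsum.summable le_rfl (show (0 : ℝ) ≤ 1 / 4 by norm_num) fun m _ hm => ?_)
    · gcongr
      norm_num
    · have : l * m ≤ t / 8 * m := by gcongr
      nlinarith
  · refine H.le_tsum_of_le_on_block ht ht1 (fun m => sq_nonneg (1 - l * m))
      hsum.summable (by norm_num) (by norm_num) fun m hm _ => ?_
    have : t / 8 * m ≤ l * m := by gcongr
    nlinarith

lemma summable_mul_one_sub_cos (H : WeightGrowth r a) (ht : 0 < t) (θ : ℝ) :
    Summable fun m : ℕ => a m * exp (-(m : ℝ) * t) * (1 - cos (m * θ)) := by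
  refine Summable.of_nonneg_of_le
    (fun m => mul_nonneg (H.mul_exp_nonneg t m) (sub_nonneg.2 (cos_le_one _)))
    (fun m => mul_le_mul_of_nonneg_left ?_ (H.mul_exp_nonneg t m)) ((H.summable ht).mul_right 2)
  linarith [neg_one_le_cos (m * θ)]

lemma exists_le_tsum_one_sub_cos (H : WeightGrowth r a) :
    ∃ c > 0, ∀ t, 0 < t → t ≤ 1 → ∀ θ, |θ| ≤ π →
      c / t ^ (r + 1) * min 1 ((θ / t) ^ 2) ≤
        ∑' m : ℕ, a m * exp (-(m : ℝ) * t) * (1 - cos (m * θ)) := by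
  refine ⟨exp (-6) / 20, by positivity, fun t ht ht1 θ hθ => ?_⟩
  wlog hθ0 : 0 ≤ θ generalizing θ
  · simpa [neg_div] using this (-θ) (by rwa [abs_neg]) (by linarith)
  rw [abs_of_nonneg hθ0] at hθ
  have sum_ge := le_sum_one_sub_cos ht ht1 hθ0 hθ
  have one_le_ceil := le_natCeil_div_mul (c := 1) ht
  have ceil_le := natCeil_div_mul_le zero_le_one ht
  calc exp (-6) / 20 / t ^ (r + 1) * min 1 ((θ / t) ^ 2)
      = (1 / t) ^ r * exp (-6) * (1 / t * (min 1 ((θ / t) ^ 2) / 20)) := by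
        rw [one_div_pow, pow_succ]
        ring
    _ ≤ (1 / t) ^ r * exp (-6) *
        ∑ m ∈ Finset.Ico ⌈1 / t⌉₊ (3 * ⌈1 / t⌉₊), (1 - cos (m * θ)) := by gcongr
    _ ≤ _ := by
        refine H.mul_sum_le_tsum ht (fun m => sub_nonneg.2 (cos_le_one _))
          (H.summable_mul_one_sub_cos ht θ) (fun m hm => ?_) fun m hm => ?_
        · have : (⌈1 / t⌉₊ : ℝ) ≤ m := by exact_mod_cast (Finset.mem_Ico.1 hm).1
          nlinarith
        · have : (m : ℝ) ≤ 3 * ⌈1 / t⌉₊ := by exact_mod_cast (Finset.mem_Ico.1 hm).2.le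
          nlinarith

end WeightGrowth

/-! ### Local expansion at the saddle point -/

section LocalExpansion

lemma eventually_nhdsGT_zero_mem_Ioc : ∀ᶠ t : ℝ in 𝓝[>] 0, 0 < t ∧ t ≤ 1 :=
  Ioc_mem_nhdsGT zero_lt_one

lemma tendsto_nhdsGT_zero_of_sq_le {f : ℝ → ℝ} {C : ℝ} {k : ℕ}
    (sq_le : ∀ t, 0 < t → t ≤ 1 → f t ^ 2 ≤ C * t ^ (k + 1)) : Tendsto f (𝓝[>] 0) (𝓝 0) := by
  have bound_tendsto : Tendsto (fun t : ℝ => C * t ^ (k + 1)) (𝓝[>] 0) (𝓝 0) := by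
    have : Continuous fun t : ℝ => C * t ^ (k + 1) := by fun_prop
    simpa using (this.tendsto 0).mono_left nhdsWithin_le_nhds
  have sq_tendsto : Tendsto (fun t => f t ^ 2) (𝓝[>] 0) (𝓝 0) := by
    refine squeeze_zero' (Eventually.of_forall fun t => sq_nonneg _) ?_ bound_tendsto
    filter_upwards [eventually_nhdsGT_zero_mem_Ioc] with t ht using sq_le t ht.1 ht.2
  rw [tendsto_zero_iff_abs_tendsto_zero]
  simpa only [sqrt_zero, sqrt_sq_eq_abs, Function.comp_def] using sq_tendsto.sqrt

lemma norm_cexp_ofReal_mul_I_sub_taylor_le (v : ℝ) :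
    ‖Complex.exp (v * Complex.I) - 1 - (v * Complex.I - v ^ 2 / 2)‖ ≤ 4 * |v| ^ 3 := by
  have norm_eq : ‖(v * Complex.I : ℂ)‖ = |v| := by simp
  rcases le_or_gt |v| 1 with small | large
  · have taylor := Complex.exp_bound (x := v * Complex.I) (by rwa [norm_eq]) three_pos
    rw [norm_eq] at taylor
    have sum_eq : ∑ m ∈ Finset.range 3, (v * Complex.I : ℂ) ^ m / m.factorial =
        1 + (v * Complex.I - v ^ 2 / 2) := by
      simp only [Finset.sum_range_succ, Finset.sum_range_zero, mul_pow, Complex.I_sq]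
      norm_num [Nat.factorial]
      ring
    rw [sum_eq, ← sub_sub] at taylor
    refine taylor.trans ?_
    rw [mul_comm]
    gcongr
    norm_num [Nat.factorial]
  · calc ‖Complex.exp (v * Complex.I) - 1 - (v * Complex.I - v ^ 2 / 2)‖
        ≤ (‖Complex.exp (v * Complex.I)‖ + ‖(1 : ℂ)‖) +
          (‖(v * Complex.I : ℂ)‖ + ‖((v : ℂ) ^ 2 / 2)‖) :=
          (norm_sub_le _ _).trans (add_le_add (norm_sub_le _ _) (norm_sub_le _ _))
      _ = 1 + 1 + (|v| + |v| ^ 2 / 2) := by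
          rw [Complex.norm_exp_ofReal_mul_I, norm_eq]
          simp
      _ ≤ 4 * |v| ^ 3 := by
          nlinarith [le_self_pow₀ large.le three_ne_zero,
            pow_le_pow_right₀ large.le (show 2 ≤ 3 by norm_num), one_le_pow₀ large.le (n := 3)]

end LocalExpansion

/-- The curvature of the saddle integral at `θ = 0`: with `y = x` and `N = x * expMoment a 1 t` its
exponent is `-θ² * angularVariance a x t / 2` to second order. -/
noncomputable def angularVariance (a : ℕ → ℝ) (x t : ℝ) : ℝ := x * expMoment a 2 t

/-- The exponent `h` such that replacing `x` by `x e^h` computes the exponential moment at `s` of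
the number of orbits, standardized by the asymptotic variance `x * residualVariance a t`. -/
noncomputable def tilt (a : ℕ → ℝ) (x s t : ℝ) : ℝ := s / √(x * residualVariance a t)

/-- The frequency at which the rescaled saddle integral oscillates when `x` is tilted to
`x e^h`, `h = tilt a x s t`, while the saddle point is kept at `t`. -/
noncomputable def tiltDrift (a : ℕ → ℝ) (x s t : ℝ) : ℝ :=
  x * expMoment a 1 t * tilt a x s t / √(angularVariance a x t)

namespace WeightGrowth

variable {r : ℕ} {a : ℕ → ℝ} {t x : ℝ}

lemma angularVariance_pos (H : WeightGrowth r a) (hx : 0 < x) (ht : 0 < t) :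
    0 < angularVariance a x t :=
  mul_pos hx (H.expMoment_pos 2 ht)

lemma exists_angularVariance_le (H : WeightGrowth r a) (hx : 0 < x) :
    ∃ C > 0, ∀ t > 0, angularVariance a x t ≤ C / t ^ (r + 3) := by
  obtain ⟨C, hC, hle⟩ := H.exists_expMoment_le 2
  refine ⟨x * C, by positivity, fun t ht => ?_⟩
  rw [mul_div_assoc]
  exact mul_le_mul_of_nonneg_left (hle t ht) hx.le

lemma exists_le_angularVariance (H : WeightGrowth r a) (hx : 0 < x) :
    ∃ c > 0, ∀ t, 0 < t → t ≤ 1 → c / t ^ (r + 3) ≤ angularVariance a x t := by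
  obtain ⟨c, hc, hle⟩ := H.exists_le_expMoment 2
  refine ⟨x * c, by positivity, fun t ht ht1 => ?_⟩
  rw [mul_div_assoc]
  exact mul_le_mul_of_nonneg_left (hle t ht ht1) hx.le

lemma tendsto_expMoment_three_div (H : WeightGrowth r a) (hx : 0 < x) :
    Tendsto (fun t => expMoment a 3 t / √(angularVariance a x t) ^ 3) (𝓝[>] 0) (𝓝 0) := by
  obtain ⟨c, hc, hle⟩ := H.exists_le_angularVariance hx
  obtain ⟨D, hD, hge⟩ := H.exists_expMoment_le 3
  refine tendsto_nhdsGT_zero_of_sq_le (C := D ^ 2 / c ^ 3) (k := r) fun t ht ht1 => ?_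
  have moment_pos := H.expMoment_pos 3 ht
  calc (expMoment a 3 t / √(angularVariance a x t) ^ 3) ^ 2
      = expMoment a 3 t ^ 2 / angularVariance a x t ^ 3 := by
        rw [div_pow, pow_right_comm, sq_sqrt (H.angularVariance_pos hx ht).le]
    _ ≤ (D / t ^ (r + 1 + 3)) ^ 2 / (c / t ^ (r + 3)) ^ 3 := by
        gcongr
        · exact hge t ht
        · exact hle t ht ht1
    _ = D ^ 2 / c ^ 3 * t ^ (r + 1) := by
        field_simp
        ring

lemma residualVariance_pos (H : WeightGrowth r a) (ht : 0 < t) (ht1 : t ≤ 1) :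
    0 < residualVariance a t := by
  obtain ⟨c, hc, hle⟩ := H.exists_le_residualVariance
  exact lt_of_lt_of_le (by positivity) (hle t ht ht1)

lemma tilt_sq (H : WeightGrowth r a) (hx : 0 < x) (s : ℝ) (ht : 0 < t) (ht1 : t ≤ 1) :
    tilt a x s t ^ 2 = s ^ 2 / (x * residualVariance a t) := by
  rw [tilt, div_pow, sq_sqrt (mul_pos hx (H.residualVariance_pos ht ht1)).le]

lemma exists_tilt_sq_le (H : WeightGrowth r a) (hx : 0 < x) (s : ℝ) :
    ∃ C ≥ 0, ∀ t, 0 < t → t ≤ 1 → tilt a x s t ^ 2 ≤ C * t ^ (r + 1) := by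
  obtain ⟨c, hc, hle⟩ := H.exists_le_residualVariance
  refine ⟨s ^ 2 / (x * c), by positivity, fun t ht ht1 => ?_⟩
  calc tilt a x s t ^ 2 = s ^ 2 / (x * residualVariance a t) := H.tilt_sq hx s ht ht1
    _ ≤ s ^ 2 / (x * (c / t ^ (r + 1))) := by
        gcongr
        exact hle t ht ht1
    _ = s ^ 2 / (x * c) * t ^ (r + 1) := by field_simp

lemma tendsto_tilt (H : WeightGrowth r a) (hx : 0 < x) (s : ℝ) :
    Tendsto (tilt a x s) (𝓝[>] 0) (𝓝 0) := by
  obtain ⟨C, -, hle⟩ := H.exists_tilt_sq_le hx s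
  exact tendsto_nhdsGT_zero_of_sq_le hle

lemma eventually_abs_tilt_lt_one (H : WeightGrowth r a) (hx : 0 < x) (s : ℝ) :
    ∀ᶠ t in 𝓝[>] 0, |tilt a x s t| < 1 := by
  have := (H.tendsto_tilt hx s).abs
  rw [abs_zero] at this
  exact this.eventually_lt_const zero_lt_one

lemma exists_tilt_sq_mul_le (H : WeightGrowth r a) (hx : 0 < x) (s : ℝ) :
    ∃ C, ∀ t, 0 < t → t ≤ 1 → tilt a x s t ^ 2 * (x * expMoment a 0 t) ≤ C := by
  obtain ⟨C, hC, tilt_le⟩ := H.exists_tilt_sq_le hx s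
  obtain ⟨D, hD, moment_le⟩ := H.exists_expMoment_le 0
  refine ⟨C * (x * D), fun t ht ht1 => ?_⟩
  have moment_pos := H.expMoment_pos 0 ht
  calc tilt a x s t ^ 2 * (x * expMoment a 0 t)
      ≤ (C * t ^ (r + 1)) * (x * (D / t ^ (r + 1))) := by
        gcongr
        · exact tilt_le t ht ht1
        · exact moment_le t ht
    _ = C * (x * D) := by field_simp

lemma tiltDrift_sq (H : WeightGrowth r a) (hx : 0 < x) (s : ℝ) (ht : 0 < t) (ht1 : t ≤ 1) :
    tiltDrift a x s t ^ 2 = tilt a x s t ^ 2 * (x * expMoment a 0 t) - s ^ 2 := by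
  have variance_ne := (H.residualVariance_pos ht ht1).ne'
  have moment_ne := (H.expMoment_pos 2 ht).ne'
  have moment_zero_eq :
      expMoment a 0 t = residualVariance a t + expMoment a 1 t ^ 2 / expMoment a 2 t := by
    rw [residualVariance, sub_add_cancel]
  rw [tiltDrift, div_pow, sq_sqrt (H.angularVariance_pos hx ht).le, mul_pow,
    H.tilt_sq hx s ht ht1, angularVariance, moment_zero_eq]
  field_simp
  ring

lemma exists_abs_tiltDrift_le (H : WeightGrowth r a) (hx : 0 < x) (s : ℝ) :
    ∃ C, ∀ t, 0 < t → t ≤ 1 → |tiltDrift a x s t| ≤ C := by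
  obtain ⟨C, hC⟩ := H.exists_tilt_sq_mul_le hx s
  refine ⟨√C, fun t ht ht1 => abs_le_sqrt ?_⟩
  rw [H.tiltDrift_sq hx s ht ht1]
  linarith [hC t ht ht1, sq_nonneg s]

lemma norm_levyExponent_term_le (H : WeightGrowth r a) (t θ : ℝ) (m : ℕ) :
    ‖((a m * exp (-(m : ℝ) * t) : ℝ) : ℂ) * (Complex.exp (m * θ * Complex.I) - 1)‖ ≤
      a m * exp (-(m : ℝ) * t) * 2 := by
  rw [norm_mul, Complex.norm_of_nonneg (H.mul_exp_nonneg t m)]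
  refine mul_le_mul_of_nonneg_left ((norm_sub_le _ _).trans ?_) (H.mul_exp_nonneg t m)
  rw [← Complex.ofReal_natCast, ← Complex.ofReal_mul, Complex.norm_exp_ofReal_mul_I, norm_one]
  norm_num

lemma summable_levyExponent (H : WeightGrowth r a) (ht : 0 < t) (θ : ℝ) :
    Summable fun m : ℕ =>
      ((a m * exp (-(m : ℝ) * t) : ℝ) : ℂ) * (Complex.exp (m * θ * Complex.I) - 1) :=
  ((H.summable ht).mul_right 2).of_norm_bounded (H.norm_levyExponent_term_le t θ)

lemma continuous_levyExponent (H : WeightGrowth r a) (ht : 0 < t) :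
    Continuous (levyExponent a t) :=
  continuous_tsum (fun m => by fun_prop) ((H.summable ht).mul_right 2)
    fun m θ => H.norm_levyExponent_term_le t θ m

lemma re_levyExponent (H : WeightGrowth r a) (ht : 0 < t) (θ : ℝ) :
    (levyExponent a t θ).re = -∑' m : ℕ, a m * exp (-(m : ℝ) * t) * (1 - cos (m * θ)) := by
  rw [levyExponent, Complex.re_tsum (H.summable_levyExponent ht θ), ← tsum_neg]
  refine tsum_congr fun m => ?_
  rw [Complex.re_ofReal_mul, Complex.sub_re, ← Complex.ofReal_natCast, ← Complex.ofReal_mul,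
    Complex.exp_ofReal_mul_I_re, Complex.one_re]
  ring

lemma norm_levyExponent_sub_taylor_le (H : WeightGrowth r a) (ht : 0 < t) (θ : ℝ) :
    ‖levyExponent a t θ - (θ * expMoment a 1 t * Complex.I - θ ^ 2 * expMoment a 2 t / 2)‖ ≤
      4 * expMoment a 3 t * |θ| ^ 3 := by
  have taylor_sum := (H.summable_levyExponent ht θ).hasSum.sub
    (((Complex.hasSum_ofReal.2 (H.summable_pow_mul 1 ht).hasSum).mul_left (θ * Complex.I)).sub
      ((Complex.hasSum_ofReal.2 (H.summable_pow_mul 2 ht).hasSum).mul_left ((θ : ℂ) ^ 2 / 2)))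
  have bound_sum := (H.summable_pow_mul 3 ht).hasSum.mul_left (4 * |θ| ^ 3)
  have norm_le := taylor_sum.norm_le_of_bounded bound_sum fun m => ?_
  · calc _ = _ := by
          rw [levyExponent, expMoment, expMoment]
          congr 1
          ring
      _ ≤ _ := norm_le
      _ = _ := by
          rw [expMoment]
          ring
  · have weight_nonneg := H.mul_exp_nonneg t m
    have taylor := norm_cexp_ofReal_mul_I_sub_taylor_le (m * θ)
    calc _ = ‖((a m * exp (-(m : ℝ) * t) : ℝ) : ℂ) * (Complex.exp ((m * θ : ℝ) * Complex.I) - 1 -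
            ((m * θ : ℝ) * Complex.I - (m * θ : ℝ) ^ 2 / 2))‖ := by
          congr 1
          push_cast
          ring
      _ = a m * exp (-(m : ℝ) * t) * ‖Complex.exp ((m * θ : ℝ) * Complex.I) - 1 -
            ((m * θ : ℝ) * Complex.I - (m * θ : ℝ) ^ 2 / 2)‖ := by
          rw [norm_mul, Complex.norm_of_nonneg weight_nonneg]
      _ ≤ a m * exp (-(m : ℝ) * t) * (4 * |m * θ| ^ 3) := by gcongr
      _ = _ := by
          rw [abs_mul, Nat.abs_cast]
          ring

end WeightGrowth

/-! ### Gaussian asymptotics of the saddle integral -/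

section GaussianIntegrand

/-- The integrand `e^{-u²/2 + ibu}` of the characteristic function of the Gaussian. -/
noncomputable def gaussianIntegrand (b u : ℝ) : ℂ :=
  Complex.exp (-(1 / 2) * u ^ 2 + b * Complex.I * u)

lemma continuous_gaussianIntegrand (b : ℝ) : Continuous (gaussianIntegrand b) := by
  unfold gaussianIntegrand
  fun_prop

lemma norm_gaussianIntegrand (b u : ℝ) : ‖gaussianIntegrand b u‖ = exp (-(1 / 2) * u ^ 2) := by
  have exponent_eq : (-(1 / 2) * u ^ 2 + b * Complex.I * u : ℂ) =
      ((-(1 / 2) * u ^ 2 : ℝ) : ℂ) + ((b * u : ℝ) : ℂ) * Complex.I := by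
    push_cast
    ring
  rw [gaussianIntegrand, exponent_eq, Complex.norm_exp, Complex.add_re, Complex.ofReal_re,
    Complex.re_ofReal_mul, Complex.I_re, mul_zero, add_zero]

lemma integrable_gaussianIntegrand (b : ℝ) : Integrable (gaussianIntegrand b) :=
  (integrable_exp_neg_mul_sq (by norm_num)).mono'
    (continuous_gaussianIntegrand b).aestronglyMeasurable
    (Eventually.of_forall fun u => (norm_gaussianIntegrand b u).le)

lemma integral_gaussianIntegrand (b : ℝ) :
    ∫ u, gaussianIntegrand b u = √(2 * π) * exp (-b ^ 2 / 2) := by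
  have integral_eq := integral_cexp_quadratic (b := -(1 / 2)) (by norm_num) (b * Complex.I) 0
  simp only [add_zero] at integral_eq
  simp only [gaussianIntegrand, integral_eq]
  congr 1
  · rw [sqrt_eq_rpow, Complex.ofReal_cpow (by positivity)]
    push_cast
    congr 1
    ring
  · rw [mul_pow, Complex.I_sq]
    push_cast
    ring_nf

lemma exp_neg_mul_one_add_sq_le_of_mul_sq_le {c u v : ℝ} (hc : 0 < c) (hv : c * u ^ 2 ≤ v) :
    exp (-v) * (1 + u ^ 2) ≤ 1 + 1 / c := by
  have exp_le : exp (-v) ≤ (1 + c * u ^ 2)⁻¹ := by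
    rw [exp_neg]
    gcongr
    linarith [add_one_le_exp v]
  calc exp (-v) * (1 + u ^ 2) ≤ (1 + c * u ^ 2)⁻¹ * (1 + u ^ 2) := by gcongr
    _ ≤ 1 + 1 / c := by
        rw [inv_mul_le_iff₀ (by positivity)]
        have expand : (1 + c * u ^ 2) * (1 + 1 / c) = 1 + u ^ 2 + (1 / c + c * u ^ 2) := by
          field_simp
          ring
        have : 0 ≤ 1 / c + c * u ^ 2 := by positivity
        linarith

lemma exp_neg_div_pow_mul_one_add_sq_le {c D t u : ℝ} (hc : 0 < c) (hD : 0 ≤ D) (ht : 0 < t)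
    (ht1 : t ≤ 1) (r : ℕ) (hu : u ^ 2 ≤ D / t ^ (r + 3)) :
    exp (-(c / t ^ (r + 1))) * (1 + u ^ 2) ≤ 6 * (1 + D) / c ^ 3 := by
  have exp_le : exp (-(c / t ^ (r + 1))) ≤ 6 * t ^ (3 * (r + 1)) / c ^ 3 := by
    rw [exp_neg, inv_le_comm₀ (exp_pos _) (by positivity)]
    refine le_of_eq_of_le ?_ (pow_div_factorial_le_exp _ (div_pos hc (pow_pos ht (r + 1))).le 3)
    rw [div_pow, ← pow_mul, mul_comm (r + 1) 3]
    simp only [Nat.factorial]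
    field_simp
    norm_num
  have sq_le : 1 + u ^ 2 ≤ (1 + D) / t ^ (r + 3) := by
    rw [add_div]
    exact add_le_add (one_le_one_div (by positivity) (pow_le_one₀ ht.le ht1)) hu
  calc exp (-(c / t ^ (r + 1))) * (1 + u ^ 2)
      ≤ (6 * t ^ (3 * (r + 1)) / c ^ 3) * ((1 + D) / t ^ (r + 3)) := by gcongr
    _ = 6 * (1 + D) / c ^ 3 * t ^ (2 * r) := by
        rw [show 3 * (r + 1) = 2 * r + (r + 3) by ring, pow_add]
        field_simp
    _ ≤ 6 * (1 + D) / c ^ 3 :=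
        mul_le_of_le_one_right (by positivity) (pow_le_one₀ ht.le ht1)

end GaussianIntegrand

/-- The exponent of `saddleIntegral a (x e^h) (x * expMoment a 1 t) t`, `h = tilt a x s t`, at the
angle `u / √(angularVariance a x t)`. -/
noncomputable def rescaledExponent (a : ℕ → ℝ) (x s t u : ℝ) : ℂ :=
  (x * exp (tilt a x s t) : ℝ) * levyExponent a t (u / √(angularVariance a x t)) -
    (x * expMoment a 1 t : ℝ) * (u / √(angularVariance a x t) : ℝ) * Complex.I

/-- The integrand of the rescaled saddle integral, extended by zero to all of `ℝ`. -/
noncomputable def rescaledIntegrand (a : ℕ → ℝ) (x s t : ℝ) : ℝ → ℂ :=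
  (Set.Ioc (-(π * √(angularVariance a x t))) (π * √(angularVariance a x t))).indicator
    fun u => Complex.exp (rescaledExponent a x s t u)

namespace WeightGrowth

variable {r : ℕ} {a : ℕ → ℝ} {t x : ℝ}

lemma rescaledExponent_sub_eq (H : WeightGrowth r a) (hx : 0 < x) (s : ℝ) (ht : 0 < t) (u : ℝ) :
    rescaledExponent a x s t u - (-(1 / 2) * u ^ 2 + tiltDrift a x s t * Complex.I * u) =
      (x * exp (tilt a x s t) : ℝ) * (levyExponent a t (u / √(angularVariance a x t)) -
        ((u / √(angularVariance a x t) : ℝ) * expMoment a 1 t * Complex.I -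
          (u / √(angularVariance a x t) : ℝ) ^ 2 * expMoment a 2 t / 2)) +
      (x * expMoment a 1 t / √(angularVariance a x t) *
        (exp (tilt a x s t) - 1 - tilt a x s t) * u : ℝ) * Complex.I -
      (u ^ 2 / 2 * (exp (tilt a x s t) - 1) : ℝ) := by
  have quadratic_eq : (u / √(angularVariance a x t)) ^ 2 * expMoment a 2 t * x = u ^ 2 := by
    have moment_ne := (H.expMoment_pos 2 ht).ne'
    rw [div_pow, sq_sqrt (H.angularVariance_pos hx ht).le, angularVariance]
    field_simp
  have quadratic_eq : ((u / √(angularVariance a x t) : ℝ) : ℂ) ^ 2 * expMoment a 2 t * x =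
      (u : ℂ) ^ 2 := by
    exact_mod_cast quadratic_eq
  rw [rescaledExponent, tiltDrift]
  push_cast at quadratic_eq ⊢
  linear_combination (-Complex.exp (tilt a x s t) / 2) * quadratic_eq

lemma norm_rescaledExponent_sub_le (H : WeightGrowth r a) (hx : 0 < x) (s : ℝ) (ht : 0 < t)
    (htilt : |tilt a x s t| ≤ 1) (u : ℝ) :
    ‖rescaledExponent a x s t u - (-(1 / 2) * u ^ 2 + tiltDrift a x s t * Complex.I * u)‖ ≤
      4 * x * |u| ^ 3 * exp (tilt a x s t) *
        (expMoment a 3 t / √(angularVariance a x t) ^ 3) +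
      |tiltDrift a x s t| * |tilt a x s t| * |u| +
      u ^ 2 / 2 * |exp (tilt a x s t) - 1| := by
  have scale_pos : 0 < √(angularVariance a x t) := sqrt_pos.2 (H.angularVariance_pos hx ht)
  rw [H.rescaledExponent_sub_eq hx s ht]
  refine (norm_sub_le _ _).trans (add_le_add ((norm_add_le _ _).trans (add_le_add ?_ ?_)) ?_)
  · rw [norm_mul, Complex.norm_of_nonneg (by positivity)]
    calc _ ≤ x * exp (tilt a x s t) *
          (4 * expMoment a 3 t * |u / √(angularVariance a x t)| ^ 3) := by
          gcongr
          exact H.norm_levyExponent_sub_taylor_le ht _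
      _ = _ := by
          rw [abs_div, abs_of_pos scale_pos]
          field_simp
  · rw [norm_mul, Complex.norm_I, mul_one, Complex.norm_real, Real.norm_eq_abs, abs_mul, abs_mul]
    calc |x * expMoment a 1 t / √(angularVariance a x t)| *
          |exp (tilt a x s t) - 1 - tilt a x s t| * |u|
        ≤ |x * expMoment a 1 t / √(angularVariance a x t)| * tilt a x s t ^ 2 * |u| := by
          gcongr
          exact abs_exp_sub_one_sub_id_le htilt
      _ = _ := by
          rw [tiltDrift, mul_div_right_comm _ (tilt a x s t), abs_mul _ (tilt a x s t),
            ← sq_abs (tilt a x s t)]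
          ring
  · rw [Complex.norm_real, Real.norm_eq_abs, abs_mul, abs_of_nonneg (by positivity)]

lemma tendsto_exp_tilt (H : WeightGrowth r a) (hx : 0 < x) (s : ℝ) :
    Tendsto (fun t => exp (tilt a x s t)) (𝓝[>] 0) (𝓝 1) := by
  simpa using (H.tendsto_tilt hx s).rexp

lemma tendsto_abs_tiltDrift_mul_abs_tilt (H : WeightGrowth r a) (hx : 0 < x) (s : ℝ) :
    Tendsto (fun t => |tiltDrift a x s t| * |tilt a x s t|) (𝓝[>] 0) (𝓝 0) := by
  obtain ⟨C, hC⟩ := H.exists_abs_tiltDrift_le hx s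
  have bound_tendsto := (H.tendsto_tilt hx s).abs.const_mul C
  rw [abs_zero, mul_zero] at bound_tendsto
  refine squeeze_zero' (Eventually.of_forall fun t => by positivity) ?_ bound_tendsto
  filter_upwards [eventually_nhdsGT_zero_mem_Ioc] with t ht
  gcongr
  exact hC t ht.1 ht.2

lemma tendsto_rescaledExponent_sub (H : WeightGrowth r a) (hx : 0 < x) (s u : ℝ) :
    Tendsto (fun t => rescaledExponent a x s t u -
      (-(1 / 2) * u ^ 2 + tiltDrift a x s t * Complex.I * u)) (𝓝[>] 0) (𝓝 0) := by
  have exp_tendsto := H.tendsto_exp_tilt hx s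
  have bound_tendsto := (((exp_tendsto.const_mul (4 * x * |u| ^ 3)).mul
    (H.tendsto_expMoment_three_div hx)).add
    ((H.tendsto_abs_tiltDrift_mul_abs_tilt hx s).mul_const |u|)).add
    ((exp_tendsto.sub_const 1).abs.const_mul (u ^ 2 / 2))
  simp only [mul_zero, zero_mul, sub_self, abs_zero, add_zero] at bound_tendsto
  refine squeeze_zero_norm' ?_ bound_tendsto
  filter_upwards [eventually_nhdsGT_zero_mem_Ioc, H.eventually_abs_tilt_lt_one hx s] with t ht htilt
  exact H.norm_rescaledExponent_sub_le hx s ht.1 htilt.le u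

lemma tendsto_cexp_rescaledExponent_sub (H : WeightGrowth r a) (hx : 0 < x) (s u : ℝ) :
    Tendsto (fun t => Complex.exp (rescaledExponent a x s t u) -
      gaussianIntegrand (tiltDrift a x s t) u) (𝓝[>] 0) (𝓝 0) := by
  have error_tendsto := ((H.tendsto_rescaledExponent_sub hx s u).cexp.sub_const 1).norm
  rw [Complex.exp_zero, sub_self, norm_zero] at error_tendsto
  refine squeeze_zero_norm (fun t => ?_) error_tendsto
  have factor : Complex.exp (rescaledExponent a x s t u) -
      gaussianIntegrand (tiltDrift a x s t) u = gaussianIntegrand (tiltDrift a x s t) u *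
        (Complex.exp (rescaledExponent a x s t u -
          (-(1 / 2) * u ^ 2 + tiltDrift a x s t * Complex.I * u)) - 1) := by
    rw [gaussianIntegrand, mul_sub, ← Complex.exp_add, add_sub_cancel, mul_one]
  rw [factor, norm_mul, norm_gaussianIntegrand]
  refine mul_le_of_le_one_left (norm_nonneg _) (exp_le_one_iff.2 ?_)
  linarith [sq_nonneg u]

lemma tendsto_sqrt_angularVariance (H : WeightGrowth r a) (hx : 0 < x) :
    Tendsto (fun t => √(angularVariance a x t)) (𝓝[>] 0) atTop := by
  obtain ⟨c, hc, hle⟩ := H.exists_le_angularVariance hx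
  refine tendsto_sqrt_atTop.comp (tendsto_atTop_mono' _ ?_
    (tendsto_inv_nhdsGT_zero.const_mul_atTop hc))
  filter_upwards [eventually_nhdsGT_zero_mem_Ioc] with t ht
  have ht0 := ht.1
  refine le_trans ?_ (hle t ht.1 ht.2)
  rw [← div_eq_mul_inv]
  gcongr
  exact pow_le_of_le_one ht.1.le ht.2 (by omega)

lemma tendsto_rescaledIntegrand_sub (H : WeightGrowth r a) (hx : 0 < x) (s u : ℝ) :
    Tendsto (fun t => rescaledIntegrand a x s t u - gaussianIntegrand (tiltDrift a x s t) u)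
      (𝓝[>] 0) (𝓝 0) := by
  refine (H.tendsto_cexp_rescaledExponent_sub hx s u).congr' ?_
  have range_tendsto := (H.tendsto_sqrt_angularVariance hx).const_mul_atTop pi_pos
  filter_upwards [range_tendsto.eventually_gt_atTop |u|] with t ht
  rw [rescaledIntegrand, Set.indicator_of_mem (Set.mem_Ioc.2 ((abs_lt.1 ht).imp_right le_of_lt))]

lemma norm_cexp_rescaledExponent (H : WeightGrowth r a) (x s : ℝ) (ht : 0 < t) (u : ℝ) :
    ‖Complex.exp (rescaledExponent a x s t u)‖ = exp (-(x * exp (tilt a x s t) *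
      ∑' m : ℕ, a m * exp (-(m : ℝ) * t) * (1 - cos (m * (u / √(angularVariance a x t)))))) := by
  rw [Complex.norm_exp, rescaledExponent, Complex.sub_re, Complex.re_ofReal_mul,
    H.re_levyExponent ht, ← Complex.ofReal_mul, Complex.re_ofReal_mul, Complex.I_re,
    mul_zero, sub_zero, mul_neg]

lemma exists_norm_cexp_rescaledExponent_le (H : WeightGrowth r a) (hx : 0 < x) (s : ℝ) :
    ∃ c > 0, ∀ᶠ t in 𝓝[>] 0, ∀ u, |u| ≤ π * √(angularVariance a x t) →
      ‖Complex.exp (rescaledExponent a x s t u)‖ ≤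
        exp (-(c / t ^ (r + 1) * min 1 ((u / √(angularVariance a x t) / t) ^ 2))) := by
  obtain ⟨d, hd, hcos⟩ := H.exists_le_tsum_one_sub_cos
  refine ⟨x * exp (-1) * d, by positivity, ?_⟩
  filter_upwards [eventually_nhdsGT_zero_mem_Ioc, H.eventually_abs_tilt_lt_one hx s]
    with t ⟨ht, ht1⟩ htilt u hu
  have scale_pos : 0 < √(angularVariance a x t) := sqrt_pos.2 (H.angularVariance_pos hx ht)
  have angle_le : |u / √(angularVariance a x t)| ≤ π := by
    rwa [abs_div, abs_of_pos scale_pos, div_le_iff₀ scale_pos]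
  rw [H.norm_cexp_rescaledExponent x s ht, exp_le_exp, neg_le_neg_iff, mul_div_assoc, mul_assoc]
  gcongr
  · exact (abs_lt.1 htilt).1.le
  · exact hcos t ht ht1 _ angle_le

lemma exists_norm_rescaledIntegrand_le (H : WeightGrowth r a) (hx : 0 < x) (s : ℝ) :
    ∃ K > 0, ∀ᶠ t in 𝓝[>] 0, ∀ u, ‖rescaledIntegrand a x s t u‖ ≤ K * (1 + u ^ 2)⁻¹ := by
  obtain ⟨C, hC, variance_le⟩ := H.exists_angularVariance_le hx
  obtain ⟨c, hc, norm_le⟩ := H.exists_norm_cexp_rescaledExponent_le hx s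
  refine ⟨6 * (1 + π ^ 2 * C) / c ^ 3 + (1 + 1 / (c / C)), by positivity, ?_⟩
  filter_upwards [eventually_nhdsGT_zero_mem_Ioc, norm_le] with t ⟨ht, ht1⟩ norm_le u
  have variance_pos := H.angularVariance_pos hx ht
  by_cases hu : u ∈ Set.Ioc (-(π * √(angularVariance a x t))) (π * √(angularVariance a x t))
  swap
  · rw [rescaledIntegrand, Set.indicator_of_notMem hu, norm_zero]
    positivity
  have abs_le : |u| ≤ π * √(angularVariance a x t) := abs_le.2 ⟨hu.1.le, hu.2⟩
  rw [rescaledIntegrand, Set.indicator_of_mem hu, ← div_eq_mul_inv, le_div_iff₀ (by positivity)]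
  refine (mul_le_mul_of_nonneg_right (norm_le u abs_le) (by positivity)).trans ?_
  rcases le_total 1 ((u / √(angularVariance a x t) / t) ^ 2) with large | small
  · have sq_le : u ^ 2 ≤ π ^ 2 * C / t ^ (r + 3) := by
      calc u ^ 2 ≤ (π * √(angularVariance a x t)) ^ 2 := sq_le_sq.2 (abs_le.trans (le_abs_self _))
        _ = π ^ 2 * angularVariance a x t := by rw [mul_pow, sq_sqrt variance_pos.le]
        _ ≤ π ^ 2 * (C / t ^ (r + 3)) := by
            gcongr
            exact variance_le t ht
        _ = π ^ 2 * C / t ^ (r + 3) := by ring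
    rw [min_eq_left large, mul_one]
    exact (exp_neg_div_pow_mul_one_add_sq_le hc (by positivity) ht ht1 r sq_le).trans
      (le_add_of_nonneg_right (by positivity))
  · have mul_sq_le : c / C * u ^ 2 ≤ c / t ^ (r + 1) * (u / √(angularVariance a x t) / t) ^ 2 := by
      have mul_le := (le_div_iff₀ (by positivity)).1 (variance_le t ht)
      calc c / C * u ^ 2 ≤ c / (angularVariance a x t * t ^ (r + 3)) * u ^ 2 := by gcongr
        _ = _ := by
            rw [div_pow, div_pow, sq_sqrt variance_pos.le]
            field_simp
            ring
    rw [min_eq_right small]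
    exact (exp_neg_mul_one_add_sq_le_of_mul_sq_le (by positivity) mul_sq_le).trans
      (le_add_of_nonneg_left (by positivity))

lemma aestronglyMeasurable_rescaledIntegrand (H : WeightGrowth r a) (x s : ℝ) (ht : 0 < t) :
    AEStronglyMeasurable (rescaledIntegrand a x s t) := by
  have exponent_continuous : Continuous (rescaledExponent a x s t) := by
    have := H.continuous_levyExponent ht
    unfold rescaledExponent
    fun_prop
  exact exponent_continuous.cexp.aestronglyMeasurable.indicator measurableSet_Ioc

lemma sqrt_angularVariance_mul_saddleIntegral (H : WeightGrowth r a) (hx : 0 < x) (s : ℝ)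
    (ht : 0 < t) :
    √(angularVariance a x t) *
        saddleIntegral a (x * exp (tilt a x s t)) (x * expMoment a 1 t) t =
      ∫ u, rescaledIntegrand a x s t u := by
  have scale_pos : 0 < √(angularVariance a x t) := sqrt_pos.2 (H.angularVariance_pos hx ht)
  have change_variables := intervalIntegral.integral_comp_div
    (a := -(π * √(angularVariance a x t))) (b := π * √(angularVariance a x t))
    (fun θ : ℝ => Complex.exp ((x * exp (tilt a x s t) : ℝ) * levyExponent a t θ -
      (x * expMoment a 1 t : ℝ) * θ * Complex.I)) scale_pos.ne'
  rw [neg_div, mul_div_cancel_right₀ _ scale_pos.ne', Complex.real_smul] at change_variables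
  simp only [rescaledIntegrand, rescaledExponent]
  rw [integral_indicator measurableSet_Ioc,
    ← intervalIntegral.integral_of_le (neg_le_self (by positivity)), change_variables,
    saddleIntegral]

lemma tendsto_sqrt_angularVariance_mul_saddleIntegral_sub (H : WeightGrowth r a) (hx : 0 < x)
    (s : ℝ) :
    Tendsto (fun t => √(angularVariance a x t) *
        saddleIntegral a (x * exp (tilt a x s t)) (x * expMoment a 1 t) t -
      √(2 * π) * exp (-tiltDrift a x s t ^ 2 / 2)) (𝓝[>] 0) (𝓝 0) := by
  obtain ⟨K, -, norm_le⟩ := H.exists_norm_rescaledIntegrand_le hx s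
  have bound_integrable : Integrable fun u : ℝ => K * (1 + u ^ 2)⁻¹ :=
    integrable_inv_one_add_sq.const_mul K
  have gaussian_integrable : Integrable fun u : ℝ => exp (-(1 / 2) * u ^ 2) :=
    integrable_exp_neg_mul_sq (by norm_num)
  have integral_tendsto : Tendsto (fun t => ∫ u, (rescaledIntegrand a x s t u -
      gaussianIntegrand (tiltDrift a x s t) u)) (𝓝[>] 0) (𝓝 (∫ _ : ℝ, (0 : ℂ))) := by
    refine tendsto_integral_filter_of_dominated_convergence _ ?_ ?_
      (bound_integrable.add gaussian_integrable)
      (Eventually.of_forall fun u => H.tendsto_rescaledIntegrand_sub hx s u)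
    · filter_upwards [self_mem_nhdsWithin] with t ht
      exact (H.aestronglyMeasurable_rescaledIntegrand x s ht).sub
        (continuous_gaussianIntegrand _).aestronglyMeasurable
    · filter_upwards [norm_le] with t norm_le
      exact Eventually.of_forall fun u => (norm_sub_le _ _).trans
        (add_le_add (norm_le u) (norm_gaussianIntegrand _ u).le)
  rw [integral_zero] at integral_tendsto
  refine integral_tendsto.congr' ?_
  filter_upwards [self_mem_nhdsWithin, norm_le] with t ht norm_le
  rw [integral_sub (bound_integrable.mono' (H.aestronglyMeasurable_rescaledIntegrand x s ht)
    (Eventually.of_forall norm_le)) (integrable_gaussianIntegrand _), integral_gaussianIntegrand,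
    H.sqrt_angularVariance_mul_saddleIntegral hx s ht]

end WeightGrowth

/-! ### Exponential moments at the saddle point -/

section ExponentialMoments

lemma abs_exp_sub_taylor_two_le {h : ℝ} (hh : |h| ≤ 1) :
    |exp h - 1 - h - h ^ 2 / 2| ≤ |h| ^ 3 := by
  have taylor := exp_bound hh (n := 3) three_pos
  norm_num [Finset.sum_range_succ, Nat.factorial] at taylor
  rw [sub_sub, sub_sub, ← add_assoc]
  exact taylor.trans (mul_le_of_le_one_right (by positivity) (by norm_num))

end ExponentialMoments

/-- The ratio, at the saddle point `t`, of the factors in front of the saddle integrals for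
`x e^h` and for `x`, multiplied by the centering `e^{-h x S}`; here `h = tilt a x s t` and
`S = expMoment a 0 t`. -/
noncomputable def tiltFactor (a : ℕ → ℝ) (x s t : ℝ) : ℝ :=
  exp ((exp (tilt a x s t) - 1 - tilt a x s t) * (x * expMoment a 0 t))

namespace WeightGrowth

variable {r : ℕ} {a : ℕ → ℝ} {t x : ℝ}

lemma tendsto_tilt_taylor_remainder (H : WeightGrowth r a) (hx : 0 < x) (s : ℝ) :
    Tendsto (fun t => (exp (tilt a x s t) - 1 - tilt a x s t - tilt a x s t ^ 2 / 2) *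
      (x * expMoment a 0 t)) (𝓝[>] 0) (𝓝 0) := by
  obtain ⟨C, hC⟩ := H.exists_tilt_sq_mul_le hx s
  have bound_tendsto := (H.tendsto_tilt hx s).abs.const_mul C
  rw [abs_zero, mul_zero] at bound_tendsto
  refine squeeze_zero_norm' ?_ bound_tendsto
  filter_upwards [eventually_nhdsGT_zero_mem_Ioc, H.eventually_abs_tilt_lt_one hx s] with t ht htilt
  have moment_pos := H.expMoment_pos 0 ht.1
  rw [norm_mul, Real.norm_eq_abs, norm_of_nonneg (by positivity)]
  calc |exp (tilt a x s t) - 1 - tilt a x s t - tilt a x s t ^ 2 / 2| * (x * expMoment a 0 t)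
      ≤ |tilt a x s t| ^ 3 * (x * expMoment a 0 t) := by
        gcongr
        exact abs_exp_sub_taylor_two_le htilt.le
    _ = tilt a x s t ^ 2 * (x * expMoment a 0 t) * |tilt a x s t| := by
        rw [← sq_abs]
        ring
    _ ≤ C * |tilt a x s t| := by
        gcongr
        exact hC t ht.1 ht.2

/-- The quadratic term of `e^h - 1 - h` leaves `h² x S / 2`, of which `tiltDrift² / 2` is
compensated by the Gaussian integral; `tiltDrift_sq` says that `s² / 2` remains. -/
lemma tendsto_tiltFactor_mul_exp (H : WeightGrowth r a) (hx : 0 < x) (s : ℝ) :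
    Tendsto (fun t => tiltFactor a x s t * exp (-tiltDrift a x s t ^ 2 / 2)) (𝓝[>] 0)
      (𝓝 (exp (s ^ 2 / 2))) := by
  have remainder_tendsto := (H.tendsto_tilt_taylor_remainder hx s).rexp.const_mul (exp (s ^ 2 / 2))
  rw [exp_zero, mul_one] at remainder_tendsto
  refine remainder_tendsto.congr' ?_
  filter_upwards [eventually_nhdsGT_zero_mem_Ioc] with t ht
  rw [tiltFactor, ← exp_add, ← exp_add, H.tiltDrift_sq hx s ht.1 ht.2]
  ring_nf

lemma exists_eventually_tiltFactor_le (H : WeightGrowth r a) (hx : 0 < x) (s : ℝ) :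
    ∃ C, ∀ᶠ t in 𝓝[>] 0, tiltFactor a x s t ≤ C := by
  obtain ⟨C, hC⟩ := H.exists_tilt_sq_mul_le hx s
  refine ⟨exp (1 + C / 2), ?_⟩
  filter_upwards [eventually_nhdsGT_zero_mem_Ioc,
    (H.tendsto_tilt_taylor_remainder hx s).eventually_lt_const zero_lt_one] with t ht remainder_lt
  refine exp_le_exp.2 ?_
  linarith [hC t ht.1 ht.2]

lemma tendsto_sqrt_angularVariance_mul_saddleIntegral (H : WeightGrowth r a) (hx : 0 < x) :
    Tendsto (fun t => √(angularVariance a x t) * saddleIntegral a x (x * expMoment a 1 t) t)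
      (𝓝[>] 0) (𝓝 √(2 * π)) := by
  have untilted := (H.tendsto_sqrt_angularVariance_mul_saddleIntegral_sub hx 0).add_const
    (√(2 * π) : ℂ)
  rw [zero_add] at untilted
  refine untilted.congr fun t => ?_
  simp [tilt, tiltDrift]

lemma tendsto_tiltFactor_mul_sqrt_mul_saddleIntegral (H : WeightGrowth r a) (hx : 0 < x) (s : ℝ) :
    Tendsto (fun t => tiltFactor a x s t * (√(angularVariance a x t) *
        saddleIntegral a (x * exp (tilt a x s t)) (x * expMoment a 1 t) t))
      (𝓝[>] 0) (𝓝 (√(2 * π) * exp (s ^ 2 / 2))) := by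
  obtain ⟨C, hC⟩ := H.exists_eventually_tiltFactor_le hx s
  have error_tendsto := H.tendsto_sqrt_angularVariance_mul_saddleIntegral_sub hx s
  have scaled_error_tendsto : Tendsto (fun t => tiltFactor a x s t * (√(angularVariance a x t) *
      saddleIntegral a (x * exp (tilt a x s t)) (x * expMoment a 1 t) t -
        √(2 * π) * exp (-tiltDrift a x s t ^ 2 / 2))) (𝓝[>] 0) (𝓝 0) := by
    have bound_tendsto := error_tendsto.norm.const_mul C
    rw [norm_zero, mul_zero] at bound_tendsto
    refine squeeze_zero_norm' ?_ bound_tendsto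
    filter_upwards [hC] with t ht
    rw [norm_mul, Complex.norm_of_nonneg (show 0 ≤ tiltFactor a x s t from (exp_pos _).le)]
    gcongr
  have main_tendsto := (H.tendsto_tiltFactor_mul_exp hx s).ofReal.const_mul (√(2 * π) : ℂ)
  have total_tendsto := scaled_error_tendsto.add main_tendsto
  rw [zero_add] at total_tendsto
  refine total_tendsto.congr fun t => ?_
  push_cast
  ring

lemma tendsto_tiltFactor_mul_saddleIntegral_div (H : WeightGrowth r a) (hx : 0 < x) (s : ℝ) :
    Tendsto (fun t => tiltFactor a x s t *
      (saddleIntegral a (x * exp (tilt a x s t)) (x * expMoment a 1 t) t /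
        saddleIntegral a x (x * expMoment a 1 t) t)) (𝓝[>] 0) (𝓝 (exp (s ^ 2 / 2) : ℝ)) := by
  have sqrt_ne : (√(2 * π) : ℂ) ≠ 0 := by
    exact_mod_cast (sqrt_pos.2 (mul_pos two_pos pi_pos)).ne'
  have ratio_tendsto := (H.tendsto_tiltFactor_mul_sqrt_mul_saddleIntegral hx s).div
    (H.tendsto_sqrt_angularVariance_mul_saddleIntegral hx) sqrt_ne
  rw [mul_div_cancel_left₀ _ sqrt_ne] at ratio_tendsto
  refine ratio_tendsto.congr' ?_
  filter_upwards [self_mem_nhdsWithin] with t ht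
  have scale_ne : (√(angularVariance a x t) : ℂ) ≠ 0 := by
    exact_mod_cast (sqrt_pos.2 (H.angularVariance_pos hx ht)).ne'
  rw [Pi.div_apply, mul_left_comm, mul_div_mul_left _ _ scale_ne, mul_div_assoc]

lemma continuousOn_expMoment (H : WeightGrowth r a) (q : ℕ) :
    ContinuousOn (expMoment a q) (Set.Ioi 0) := by
  intro t ht
  have ht : 0 < t := ht
  have continuousOn_Ici : ContinuousOn (expMoment a q) (Set.Ici (t / 2)) := by
    refine continuousOn_tsum (fun m => by fun_prop) (H.summable_pow_mul q (half_pos ht))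
      fun m u hu => ?_
    have hu : t / 2 ≤ u := hu
    have coeff_nonneg : 0 ≤ (m : ℝ) ^ q * a m := mul_nonneg (by positivity) (H.nonneg m)
    rw [norm_of_nonneg (mul_nonneg coeff_nonneg (exp_pos _).le), neg_mul, neg_mul]
    gcongr
  exact (continuousOn_Ici.continuousAt (Ici_mem_nhds (half_lt_self ht))).continuousWithinAt

lemma exists_le_mul_expMoment_one (H : WeightGrowth r a) (hx : 0 < x) {n : ℕ} (hn : 1 ≤ n) :
    ∃ t, 0 < t ∧ t ≤ 1 ∧ n ≤ x * expMoment a 1 t := by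
  obtain ⟨c, hc, hle⟩ := H.exists_le_expMoment 1
  have t_pos : 0 < min 1 (x * c / n) := lt_min zero_lt_one (by positivity)
  have t_le_one := min_le_left 1 (x * c / n)
  have t_le := (le_div_iff₀ (by positivity)).1 (min_le_right 1 (x * c / n))
  refine ⟨min 1 (x * c / n), t_pos, t_le_one, ?_⟩
  generalize min 1 (x * c / n) = t at *
  calc (n : ℝ) ≤ x * c / t := by
        rw [le_div_iff₀ t_pos]
        linarith
    _ ≤ x * c / t ^ (r + 1 + 1) := by
        gcongr
        exact pow_le_of_le_one t_pos.le t_le_one (by omega)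
    _ = x * (c / t ^ (r + 1 + 1)) := by ring
    _ ≤ x * expMoment a 1 t := by
        gcongr
        exact hle t t_pos t_le_one

lemma exists_mul_expMoment_one_le_one (H : WeightGrowth r a) (hx : 0 < x) :
    ∃ t ≥ 1, x * expMoment a 1 t ≤ 1 := by
  obtain ⟨C, hC, hle⟩ := H.exists_expMoment_le 1
  refine ⟨max 1 (x * C), le_max_left _ _, ?_⟩
  have one_le := le_max_left 1 (x * C)
  have mul_le := le_max_right 1 (x * C)
  generalize max 1 (x * C) = t at *
  have t_pos : 0 < t := zero_lt_one.trans_le one_le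
  calc x * expMoment a 1 t ≤ x * (C / t ^ (r + 1 + 1)) := by
        gcongr
        exact hle t t_pos
    _ ≤ x * (C / t) := by
        gcongr
        exact le_self_pow₀ one_le (by omega)
    _ = x * C / t := by ring
    _ ≤ 1 := (div_le_one t_pos).2 mul_le

lemma exists_saddlePoint (H : WeightGrowth r a) (hx : 0 < x) {n : ℕ} (hn : 1 ≤ n) :
    ∃ t > 0, x * expMoment a 1 t = n := by
  obtain ⟨t₁, t₁_pos, t₁_le, le_moment⟩ := H.exists_le_mul_expMoment_one hx hn
  obtain ⟨t₂, one_le_t₂, moment_le⟩ := H.exists_mul_expMoment_one_le_one hx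
  have continuousOn : ContinuousOn (fun t => x * expMoment a 1 t) (Set.Icc t₁ t₂) :=
    continuousOn_const.mul ((H.continuousOn_expMoment 1).mono fun t ht => t₁_pos.trans_le ht.1)
  obtain ⟨t, ht, moment_eq⟩ := intermediate_value_Icc' (t₁_le.trans one_le_t₂) continuousOn
    ⟨moment_le.trans (by exact_mod_cast hn), le_moment⟩
  exact ⟨t, t₁_pos.trans_le ht.1, moment_eq⟩

lemma tendsto_saddlePoint (H : WeightGrowth r a) (hx : 0 < x) {τ : ℕ → ℝ}
    (hτ : ∀ n, 1 ≤ n → 0 < τ n ∧ x * expMoment a 1 (τ n) = n) : Tendsto τ atTop (𝓝[>] 0) := by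
  obtain ⟨C, hC, hle⟩ := H.exists_expMoment_le 1
  refine (nhdsGT_basis 0).tendsto_right_iff.2 fun ε hε => ?_
  filter_upwards [eventually_ge_atTop 1, tendsto_natCast_atTop_atTop.eventually_gt_atTop
    (x * (C / ε ^ (r + 1 + 1)))] with n hn n_gt
  obtain ⟨τ_pos, moment_eq⟩ := hτ n hn
  refine ⟨τ_pos, lt_of_not_ge fun ε_le => n_gt.not_ge ?_⟩
  rw [← moment_eq]
  calc x * expMoment a 1 (τ n) ≤ x * (C / τ n ^ (r + 1 + 1)) := by
        gcongr
        exact hle _ τ_pos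
    _ ≤ x * (C / ε ^ (r + 1 + 1)) := by gcongr

end WeightGrowth

/-! ### The method of moments for weighted finite families -/

/-- The `p`-th moment of the standard Gaussian distribution. -/
noncomputable def gaussianMoment (p : ℕ) : ℝ :=
  (1 / √(2 * π)) * ∫ s : ℝ, s ^ p * exp (-s ^ 2 / 2)

/-- The `p`-th moment of the finite measure `∑ k ∈ A, w k • δ (X k)`. -/
noncomputable def weightedMoment {κ : Type*} (A : Finset κ) (w X : κ → ℝ) (p : ℕ) : ℝ :=
  ∑ k ∈ A, w k * X k ^ p

/-- The moment generating function of the finite measure `∑ k ∈ A, w k • δ (X k)`. -/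
noncomputable def weightedMgf {κ : Type*} (A : Finset κ) (w X : κ → ℝ) (s : ℝ) : ℝ :=
  ∑ k ∈ A, w k * exp (s * X k)

/-- The family `X` centered at its mean and divided by its standard deviation, for the
weights `w` on `A`. -/
noncomputable def standardized {κ : Type*} (A : Finset κ) (w X : κ → ℝ) (k : κ) : ℝ :=
  (X k - weightedMoment A w X 1) / √(weightedMoment A w (fun j => X j - weightedMoment A w X 1) 2)

section GaussianMoment

open ProbabilityTheory

lemma gaussianMoment_eq_integral_gaussianReal (p : ℕ) :
    gaussianMoment p = ∫ s, s ^ p ∂gaussianReal 0 1 := by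
  rw [integral_gaussianReal_eq_integral_smul one_ne_zero, gaussianMoment, ← integral_const_mul]
  congr 1 with s
  simp only [gaussianPDFReal_def, NNReal.coe_one, mul_one, sub_zero, smul_eq_mul, one_div]
  ring

lemma gaussianMoment_one : gaussianMoment 1 = 0 := by
  simp [gaussianMoment_eq_integral_gaussianReal]

lemma gaussianMoment_two : gaussianMoment 2 = 1 := by
  have variance_eq := variance_fun_id_gaussianReal (μ := 0) (v := 1)
  rw [variance_eq_integral measurable_id'.aemeasurable] at variance_eq
  simpa [gaussianMoment_eq_integral_gaussianReal] using variance_eq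

lemma hasFPowerSeriesAt_exp_sq_div_two : HasFPowerSeriesAt (fun s : ℝ => exp (s ^ 2 / 2))
    (.ofScalars ℝ fun p => gaussianMoment p / p.factorial) 0 := by
  have mgf_series := hasFPowerSeriesAt_mgf (X := id) (μ := gaussianReal 0 1) (v := 0) (by simp)
  rw [mgf_id_gaussianReal] at mgf_series
  convert mgf_series using 1
  · simp
  · simp [gaussianMoment_eq_integral_gaussianReal]

lemma eq_gaussianMoment_of_hasSum {c : ℕ → ℝ}
    (hc : ∀ᶠ s in 𝓝 0, HasSum (fun p => c p * s ^ p / p.factorial) (exp (s ^ 2 / 2))) :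
    c = gaussianMoment := by
  have series : HasFPowerSeriesAt (fun s : ℝ => exp (s ^ 2 / 2))
      (.ofScalars ℝ fun p => c p / p.factorial) 0 := by
    rw [hasFPowerSeriesAt_iff]
    filter_upwards [hc] with s hs
    simpa only [FormalMultilinearSeries.coeff_ofScalars, zero_add, smul_eq_mul, mul_div_assoc',
      mul_comm] using hs
  ext p
  have coeff_eq := congrArg (fun q => q.coeff p)
    (series.eq_formalMultilinearSeries hasFPowerSeriesAt_exp_sq_div_two)
  simp only [FormalMultilinearSeries.coeff_ofScalars] at coeff_eq
  exact (div_left_inj' (by positivity)).1 coeff_eq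

end GaussianMoment

section FiniteFamily

variable {κ : Type*} (A : Finset κ) {w : κ → ℝ} (X : κ → ℝ)

lemma exp_abs_le_exp_add_exp_neg (u : ℝ) : exp |u| ≤ exp u + exp (-u) := by
  rcases abs_choice u with h | h <;> rw [h]
  · exact le_add_of_nonneg_right (exp_pos _).le
  · exact le_add_of_nonneg_left (exp_pos _).le

lemma abs_weightedMoment_le (hw : ∀ k, 0 ≤ w k) (p : ℕ) :
    |weightedMoment A w X p| ≤ p.factorial * (weightedMgf A w X 1 + weightedMgf A w X (-1)) := by
  simp only [weightedMoment, weightedMgf, ← Finset.sum_add_distrib, Finset.mul_sum]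
  refine (Finset.abs_sum_le_sum_abs _ _).trans (Finset.sum_le_sum fun k _ => ?_)
  calc |w k * X k ^ p| = w k * |X k| ^ p := by rw [abs_mul, abs_of_nonneg (hw k), abs_pow]
    _ ≤ w k * (p.factorial * (exp (X k) + exp (-X k))) := by
        refine mul_le_mul_of_nonneg_left ?_ (hw k)
        rw [← div_le_iff₀' (by positivity)]
        exact (pow_div_factorial_le_exp _ (abs_nonneg _) p).trans (exp_abs_le_exp_add_exp_neg _)
    _ = p.factorial * (w k * exp (1 * X k) + w k * exp (-1 * X k)) := by
        rw [one_mul, neg_one_mul]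
        ring

lemma hasSum_weightedMoment_mul_pow (w : κ → ℝ) (s : ℝ) :
    HasSum (fun p => weightedMoment A w X p * s ^ p / p.factorial) (weightedMgf A w X s) := by
  have exp_hasSum (k : κ) (_ : k ∈ A) : HasSum (fun p : ℕ => w k * ((s * X k) ^ p / p.factorial))
      (w k * exp (s * X k)) := by
    refine HasSum.mul_left _ ?_
    rw [exp_eq_exp_ℝ]
    exact NormedSpace.expSeries_div_hasSum_exp _
  rw [weightedMgf]
  convert hasSum_sum exp_hasSum using 2 with p
  rw [weightedMoment, Finset.sum_mul, Finset.sum_div]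
  exact Finset.sum_congr rfl fun k _ => by ring

lemma weightedMoment_sub_const (w : κ → ℝ) (c : ℝ) (p : ℕ) :
    weightedMoment A w (fun k => X k - c) p =
      ∑ j ∈ Finset.range (p + 1), weightedMoment A w X j * (-c) ^ (p - j) * p.choose j := by
  simp only [weightedMoment, sub_eq_add_neg, add_pow, Finset.mul_sum, Finset.sum_mul]
  rw [Finset.sum_comm]
  exact Finset.sum_congr rfl fun j _ => Finset.sum_congr rfl fun k _ => by ring

lemma weightedMoment_const_mul (w : κ → ℝ) (b : ℝ) (p : ℕ) :
    weightedMoment A w (fun k => b * X k) p = b ^ p * weightedMoment A w X p := by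
  simp only [weightedMoment, Finset.mul_sum]
  exact Finset.sum_congr rfl fun k _ => by ring

lemma weightedMoment_standardized (w : κ → ℝ) (p : ℕ) :
    weightedMoment A w (standardized A w X) p =
      weightedMoment A w (fun k => X k - weightedMoment A w X 1) p /
        √(weightedMoment A w (fun k => X k - weightedMoment A w X 1) 2) ^ p := by
  simp only [weightedMoment, standardized, Finset.sum_div, div_pow, mul_div_assoc]

lemma standardized_const_add_const_mul (hw : ∑ k ∈ A, w k = 1) (c : ℝ) {b : ℝ} (hb : 0 < b) :
    standardized A w (fun k => c + b * X k) = standardized A w X := by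
  have mean_eq : weightedMoment A w (fun k => c + b * X k) 1 = c + b * weightedMoment A w X 1 := by
    simp only [weightedMoment, pow_one, mul_add, Finset.sum_add_distrib, ← Finset.sum_mul, hw,
      one_mul, Finset.mul_sum, mul_left_comm]
  have centered_eq (k : κ) : c + b * X k - (c + b * weightedMoment A w X 1) =
      b * (X k - weightedMoment A w X 1) := by ring
  ext k
  simp only [standardized, mean_eq, centered_eq, weightedMoment_const_mul]
  rw [sqrt_mul (sq_nonneg b), sqrt_sq hb.le, mul_div_mul_left _ _ hb.ne']

end FiniteFamily

lemma norm_mul_pow_div_factorial_le {z s C : ℝ} {p : ℕ} (hz : |z| ≤ p.factorial * C)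
    (hs : |s| ≤ 1 / 2) : ‖z * s ^ p / p.factorial‖ ≤ C * (1 / 2) ^ p := by
  have factorial_pos : (0 : ℝ) < p.factorial := by positivity
  rw [norm_eq_abs, abs_div, abs_mul, abs_pow, abs_of_pos factorial_pos, div_le_iff₀ factorial_pos]
  calc |z| * |s| ^ p ≤ p.factorial * C * (1 / 2) ^ p :=
        mul_le_mul hz (pow_le_pow_left₀ (abs_nonneg s) hs p) (by positivity)
          ((abs_nonneg z).trans hz)
    _ = C * (1 / 2) ^ p * p.factorial := by ring

section Convergence

variable {ι κ : Type*} {l : Filter ι} {A : ι → Finset κ} {w X : ι → κ → ℝ}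

lemma exists_tendsto_ultrafilter_of_abs_le {g : Ultrafilter ι} {m : ι → ℝ} {C : ℝ}
    (hm : ∀ᶠ n in g, |m n| ≤ C) : ∃ c, Tendsto m g (𝓝 c) := by
  have mem_Icc : Set.Icc (-C) C ∈ g.map m := hm.mono fun n hn => abs_le.1 hn
  obtain ⟨c, -, hc⟩ := isCompact_Icc.ultrafilter_le_nhds (g.map m) (le_principal_iff.2 mem_Icc)
  exact ⟨c, hc⟩

lemma eq_gaussianMoment_of_tendsto_weightedMoment [l.NeBot] {C : ℝ}
    (hbound : ∀ᶠ n in l, ∀ p, |weightedMoment (A n) (w n) (X n) p| ≤ p.factorial * C)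
    (hmgf : ∀ s, Tendsto (fun n => weightedMgf (A n) (w n) (X n) s) l (𝓝 (exp (s ^ 2 / 2))))
    {c : ℕ → ℝ} (hc : ∀ p, Tendsto (fun n => weightedMoment (A n) (w n) (X n) p) l (𝓝 (c p))) :
    c = gaussianMoment := by
  refine eq_gaussianMoment_of_hasSum ?_
  filter_upwards [Metric.closedBall_mem_nhds 0 (one_half_pos (α := ℝ))] with s hs
  rw [mem_closedBall_zero_iff, norm_eq_abs] at hs
  have geometric_summable : Summable fun p : ℕ => C * (1 / 2) ^ p :=
    summable_geometric_two.mul_left C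
  have limit_bound (p : ℕ) : |c p| ≤ p.factorial * C :=
    le_of_tendsto (hc p).abs (hbound.mono fun n hn => hn p)
  have limit_summable : Summable fun p => c p * s ^ p / p.factorial :=
    .of_norm_bounded geometric_summable fun p => norm_mul_pow_div_factorial_le (limit_bound p) hs
  have tendsto_series := tendsto_tsum_of_dominated_convergence geometric_summable
    (fun p => ((hc p).mul_const (s ^ p)).div_const (p.factorial : ℝ))
    (hbound.mono fun n hn p => norm_mul_pow_div_factorial_le (hn p) hs)
  simp only [(hasSum_weightedMoment_mul_pow _ _ _ s).tsum_eq] at tendsto_series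
  rw [← tendsto_nhds_unique tendsto_series (hmgf s)]
  exact limit_summable.hasSum

/-- Along an ultrafilter all moments converge, since they are bounded; their limits are then
identified by the power series of the moment generating function. -/
lemma tendsto_weightedMoment_gaussianMoment (hw : ∀ n k, 0 ≤ w n k)
    (hmgf : ∀ s, Tendsto (fun n => weightedMgf (A n) (w n) (X n) s) l (𝓝 (exp (s ^ 2 / 2))))
    (p : ℕ) : Tendsto (fun n => weightedMoment (A n) (w n) (X n) p) l (𝓝 (gaussianMoment p)) := by
  have sum_tendsto := (hmgf 1).add (hmgf (-1))
  obtain ⟨C, hC⟩ := sum_tendsto.isBoundedUnder_le.eventually_le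
  have moment_le : ∀ᶠ n in l, ∀ p, |weightedMoment (A n) (w n) (X n) p| ≤ p.factorial * C := by
    filter_upwards [hC] with n hn p
    exact (abs_weightedMoment_le (A n) (X n) (hw n) p).trans (by gcongr)
  rw [tendsto_iff_ultrafilter]
  intro g hg
  have moment_le_ultrafilter := moment_le.filter_mono hg
  have limit_exists (p : ℕ) :=
    exists_tendsto_ultrafilter_of_abs_le (moment_le_ultrafilter.mono fun n hn => hn p)
  choose c hc using limit_exists
  rw [← eq_gaussianMoment_of_tendsto_weightedMoment moment_le_ultrafilter
    (fun s => (hmgf s).mono_left hg) hc]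
  exact hc p

lemma tendsto_weightedMoment_sub_mean
    (hm : ∀ p, Tendsto (fun n => weightedMoment (A n) (w n) (X n) p) l (𝓝 (gaussianMoment p)))
    (p : ℕ) : Tendsto (fun n => weightedMoment (A n) (w n)
      (fun k => X n k - weightedMoment (A n) (w n) (X n) 1) p) l (𝓝 (gaussianMoment p)) := by
  simp only [weightedMoment_sub_const]
  have mean_tendsto := hm 1
  rw [gaussianMoment_one] at mean_tendsto
  have expansion_tendsto := tendsto_finsetSum (Finset.range (p + 1)) fun j _ =>
    ((hm j).mul (mean_tendsto.neg.pow (p - j))).mul_const (p.choose j : ℝ)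
  convert expansion_tendsto
  rw [Finset.sum_range_succ, Finset.sum_eq_zero]
  · simp
  · intro j hj
    rw [neg_zero, zero_pow (Nat.sub_ne_zero_of_lt (Finset.mem_range.1 hj)), mul_zero, zero_mul]

lemma tendsto_weightedMoment_standardized
    (hm : ∀ p, Tendsto (fun n => weightedMoment (A n) (w n) (X n) p) l (𝓝 (gaussianMoment p)))
    (p : ℕ) : Tendsto (fun n => weightedMoment (A n) (w n) (standardized (A n) (w n) (X n)) p) l
      (𝓝 (gaussianMoment p)) := by
  simp only [weightedMoment_standardized]
  have variance_tendsto := tendsto_weightedMoment_sub_mean hm 2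
  rw [gaussianMoment_two] at variance_tendsto
  have scale_tendsto := variance_tendsto.sqrt.pow p
  rw [sqrt_one, one_pow] at scale_tendsto
  have quotient_tendsto := (tendsto_weightedMoment_sub_mean hm p).div scale_tendsto one_ne_zero
  rwa [div_one] at quotient_tendsto

end Convergence

/-! ### The distribution of the number of joint orbits -/

/-- The probability that `K_{ℓ,n} = k` under `P_{ℓ,n,x}`. -/
noncomputable def orbitWeight (ℓ : ℕ) (x : ℝ) (n k : ℕ) : ℝ :=
  Acount ℓ n k * x ^ k / orbitGF (Fin ℓ) (Fin n) x

/-- The number `k` of orbits, centered by `x * expMoment a 0 t` and scaled by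
`√(x * residualVariance a t)`, which at the saddle point `t` approximate the mean and the standard
deviation of `K_{ℓ,n}`. -/
noncomputable def saddleNormalized (a : ℕ → ℝ) (x t : ℝ) (k : ℕ) : ℝ :=
  (k - x * expMoment a 0 t) / √(x * residualVariance a t)

section OrbitDistribution

variable {x : ℝ}

lemma orbitWeight_nonneg (ℓ : ℕ) (hx : 0 < x) (n k : ℕ) : 0 ≤ orbitWeight ℓ x n k :=
  div_nonneg (by positivity) (orbitGF_pos (Fin ℓ) hx).le

lemma sum_orbitWeight (ℓ : ℕ) (hx : 0 < x) (n : ℕ) :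
    ∑ k ∈ Finset.range (n + 1), orbitWeight ℓ x n k = 1 := by
  simp only [orbitWeight]
  rw [← Finset.sum_div, sum_Acount_mul_pow, div_self (orbitGF_pos (Fin ℓ) hx).ne']

lemma expectK_eq_sum_orbitWeight (ℓ n : ℕ) (x : ℝ) (g : ℕ → ℝ) :
    expectK ℓ n x g = ∑ k ∈ Finset.range (n + 1), orbitWeight ℓ x n k * g k := by
  rw [expectK, sum_Acount_mul_pow, Finset.sum_div]
  exact Finset.sum_congr rfl fun k _ => by rw [orbitWeight]; ring

lemma expectK_standardized_pow (ℓ n : ℕ) (x : ℝ) (p : ℕ) :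
    expectK ℓ n x (fun k => ((k - meanK ℓ n x) / √(varK ℓ n x)) ^ p) =
      weightedMoment (Finset.range (n + 1)) (orbitWeight ℓ x n)
        (standardized (Finset.range (n + 1)) (orbitWeight ℓ x n) fun k => k) p := by
  simp only [varK, meanK, expectK_eq_sum_orbitWeight, weightedMoment, standardized, pow_one]

lemma standardized_saddleNormalized {a : ℕ → ℝ} {t : ℝ} (hσ : 0 < x * residualVariance a t)
    {A : Finset ℕ} {w : ℕ → ℝ} (hw : ∑ k ∈ A, w k = 1) :
    standardized A w (saddleNormalized a x t) = standardized A w fun k => k := by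
  have natCast_eq (k : ℕ) : (k : ℝ) =
      x * expMoment a 0 t + √(x * residualVariance a t) * saddleNormalized a x t k := by
    rw [saddleNormalized, mul_div_cancel₀ _ (sqrt_pos.2 hσ).ne', add_sub_cancel]
  conv_rhs => enter [3, k]; rw [natCast_eq]
  exact (standardized_const_add_const_mul A _ hw _ (sqrt_pos.2 hσ)).symm

lemma orbitGF_eq_mul_saddleIntegral (r n : ℕ) (y : ℝ) {t : ℝ} (ht : 0 < t) :
    (orbitGF (Fin (r + 2)) (Fin n) y : ℂ) =
      (n.factorial / (2 * π) * exp (n * t + y * expMoment (transitiveWeight (r + 2)) 0 t) : ℝ) *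
        saddleIntegral (transitiveWeight (r + 2)) y n t := by
  have H := weightGrowth_transitiveWeight r
  refine eq_mul_saddleIntegral_of_recursion (fun t ht => ?_) H.map_zero y
    (W := fun n => orbitGF (Fin (r + 2)) (Fin n) y) (orbitGF_of_isEmpty _ y) (fun n => ?_) n ht
  · simpa only [abs_of_nonneg (H.nonneg _)] using H.summable ht
  · rw [orbitGF_fin_succ]
    congr! 4 with k
    rw [transitiveWeight_of_ne_zero _ k.succ_ne_zero, mul_div_cancel₀ _ (by positivity)]

lemma weightedMgf_saddleNormalized (ℓ n : ℕ) (a : ℕ → ℝ) (x s t : ℝ) :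
    weightedMgf (Finset.range (n + 1)) (orbitWeight ℓ x n) (saddleNormalized a x t) s =
      exp (-(tilt a x s t * (x * expMoment a 0 t))) *
        orbitGF (Fin ℓ) (Fin n) (x * exp (tilt a x s t)) / orbitGF (Fin ℓ) (Fin n) x := by
  rw [← sum_Acount_mul_pow ℓ n (x * exp _), Finset.mul_sum, Finset.sum_div]
  refine Finset.sum_congr rfl fun k _ => ?_
  have exp_eq : exp (s * saddleNormalized a x t k) =
      exp (tilt a x s t) ^ k * exp (-(tilt a x s t * (x * expMoment a 0 t))) := by
    rw [← exp_nat_mul, ← exp_add, saddleNormalized, tilt]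
    ring_nf
  rw [exp_eq, orbitWeight, mul_pow]
  ring

lemma saddleIntegral_transitiveWeight_ne_zero (r n : ℕ) (hx : 0 < x) {t : ℝ} (ht : 0 < t) :
    saddleIntegral (transitiveWeight (r + 2)) x n t ≠ 0 := by
  intro integral_eq_zero
  have orbitGF_eq := orbitGF_eq_mul_saddleIntegral r n x ht
  rw [integral_eq_zero, mul_zero, Complex.ofReal_eq_zero] at orbitGF_eq
  exact (orbitGF_pos _ hx).ne' orbitGF_eq

lemma weightedMgf_saddleNormalized_eq_tiltFactor_mul (r n : ℕ) (hx : 0 < x) (s : ℝ) {t : ℝ}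
    (ht : 0 < t) :
    (weightedMgf (Finset.range (n + 1)) (orbitWeight (r + 2) x n)
        (saddleNormalized (transitiveWeight (r + 2)) x t) s : ℂ) =
      tiltFactor (transitiveWeight (r + 2)) x s t *
        (saddleIntegral (transitiveWeight (r + 2))
            (x * exp (tilt (transitiveWeight (r + 2)) x s t)) n t /
          saddleIntegral (transitiveWeight (r + 2)) x n t) := by
  have integral_ne := saddleIntegral_transitiveWeight_ne_zero r n hx ht
  rw [weightedMgf_saddleNormalized, Complex.ofReal_div, Complex.ofReal_mul,
    orbitGF_eq_mul_saddleIntegral r n _ ht, orbitGF_eq_mul_saddleIntegral r n _ ht, tiltFactor]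
  generalize transitiveWeight (r + 2) = a at *
  have exp_eq : exp (-(tilt a x s t * (x * expMoment a 0 t))) *
      exp (n * t + x * exp (tilt a x s t) * expMoment a 0 t) =
        exp ((exp (tilt a x s t) - 1 - tilt a x s t) * (x * expMoment a 0 t)) *
          exp (n * t + x * expMoment a 0 t) := by
    rw [← exp_add, ← exp_add]
    ring_nf
  have prefactor_ne : (n.factorial / (2 * π) * exp (n * t + x * expMoment a 0 t) : ℝ) ≠ 0 := by
    positivity
  rw [← mul_assoc, ← Complex.ofReal_mul, mul_left_comm, exp_eq, mul_left_comm, Complex.ofReal_mul,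
    mul_assoc, mul_div_assoc, mul_div_mul_left _ _ (Complex.ofReal_ne_zero.2 prefactor_ne)]

lemma tendsto_weightedMgf_saddleNormalized (r : ℕ) (hx : 0 < x) {τ : ℕ → ℝ}
    (hτ : ∀ n, 1 ≤ n → 0 < τ n ∧ x * expMoment (transitiveWeight (r + 2)) 1 (τ n) = n) (s : ℝ) :
    Tendsto (fun n => weightedMgf (Finset.range (n + 1)) (orbitWeight (r + 2) x n)
      (saddleNormalized (transitiveWeight (r + 2)) x (τ n)) s) atTop (𝓝 (exp (s ^ 2 / 2))) := by
  have H := weightGrowth_transitiveWeight r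
  have complex_tendsto :=
    (H.tendsto_tiltFactor_mul_saddleIntegral_div hx s).comp (H.tendsto_saddlePoint hx hτ)
  refine ((Complex.continuous_re.tendsto _).comp complex_tendsto).congr' ?_
  filter_upwards [eventually_ge_atTop 1] with n hn
  obtain ⟨τ_pos, saddle_eq⟩ := hτ n hn
  simp only [Function.comp_apply]
  rw [saddle_eq, ← weightedMgf_saddleNormalized_eq_tiltFactor_mul r n hx s τ_pos, Complex.ofReal_re]

end OrbitDistribution

/-- the normalized number of joint orbits converges to the standard Gaussian
in the sense of moments: for every nonnegative integer `p`, with `f(s) = s^p`. -/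
theorem clt_moments (ℓ : ℕ) (hℓ : 2 ≤ ℓ) (x : ℝ) (hx : 0 < x) (p : ℕ) :
    Tendsto (fun n : ℕ =>
        expectK ℓ n x (fun k =>
          (((k : ℝ) - meanK ℓ n x) / Real.sqrt (varK ℓ n x)) ^ p))
      atTop
      (nhds ((1 / Real.sqrt (2 * π)) * ∫ s : ℝ, s ^ p * Real.exp (-s ^ 2 / 2))) := by
  obtain ⟨r, rfl⟩ := Nat.exists_eq_add_of_le' hℓ
  have H := weightGrowth_transitiveWeight r
  choose! τ hτ using fun n (hn : 1 ≤ n) => H.exists_saddlePoint hx hn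
  have mgf_tendsto := tendsto_weightedMgf_saddleNormalized r hx hτ
  have moment_tendsto :=
    tendsto_weightedMoment_gaussianMoment (fun n => orbitWeight_nonneg (r + 2) hx n) mgf_tendsto
  refine (tendsto_weightedMoment_standardized moment_tendsto p).congr' ?_
  filter_upwards [(H.tendsto_saddlePoint hx hτ).eventually eventually_nhdsGT_zero_mem_Ioc] with n hn
  have variance_pos := mul_pos hx (H.residualVariance_pos hn.1 hn.2)
  rw [expectK_standardized_pow,
    standardized_saddleNormalized variance_pos (sum_orbitWeight (r + 2) hx n)]
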